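/- arXiv:1702.00972 — 6 statements merged into one kernel-verified Lean document; each statement's English description precedes it below -/
import Mathlib

section
/- (Sobolev embedding inequality for Lizorkin–Triebel quasi-norms of band-limited sequences.) Let n ≥ 1, let s, s₀ ∈ ℝ and 0 < p₀ < p < ∞ satisfy s − n/p = s₀ − n/p₀, let 0 < q < ∞ and A > 0. Then there exists a constant C > 0 such that for every sequence (f_j)_{j∈ℕ} of Schwartz functions on ℝⁿ with supp 𝓕f_j contained in the closed ball of radius A·2^j about the origin, one has (∫_{ℝⁿ} (∑_{j=0}^∞ 2^{s j q} |f_j(x)|^q)^{p/q} dx)^{1/p} ≤ C · (∫_{ℝⁿ} (sup_{j∈ℕ} 2^{s₀ j} |f_j(x)|)^{p₀} dx)^{1/p₀}, where both sides may be infinite. -/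
open scoped ENNReal NNReal FourierTransform SchwartzMap
open MeasureTheory

/-!
An integrable `f` with spectrum in a ball is reproduced by convolution with a Schwartz kernel. Hence
`|f|` is comparable to its supremum on a set whose measure is bounded below, and integrating
`|f| ^ p₀` over that set gives the Nikolskii inequality `‖f‖_∞ ≤ C ‖f‖_{p₀}` for every `p₀ > 0`.
Rescaling, and writing `F = sup_j 2^{s₀j} |f_j|`, one obtains for each `j` two bounds

  `2^{s₀j} |f_j(x)| ≤ F(x)`  and  `2^{s₀j} |f_j(x)| ≤ C 2^{jn/p₀} ‖F‖_{p₀}`.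

The first is better for large `j`, the second for small `j`. Multiplied by
`2^{(s - s₀)j} = 2^{-(1 - θ)jn/p₀}`, where `θ = p₀/p`, they decay geometrically away from the index
at which they agree, so that the `ℓ^q` norm over `j` is at most `C F(x)^θ ‖F‖_{p₀}^{1 - θ}`. The
`L^p` norm of this last expression is `C ‖F‖_{p₀}`.
-/

section Kernel

variable {X : Type*} [MeasurableSpace X] {μ : Measure X} {g : X → ℝ≥0∞} {k : X → X → ℝ≥0∞}
  {K L : ℝ≥0}

theorem one_le_two_mul_measure_of_le_lintegral_kernel (hg : Measurable g) (hK : K ≠ 0)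
    (hkK : ∀ x, ∫⁻ y, k x y ∂μ ≤ K) (hkL : ∀ x y, k x y ≤ L)
    (hgk : ∀ x, g x ≤ ∫⁻ y, g y * k x y ∂μ) (hM0 : ⨆ x, g x ≠ 0) (hM : ⨆ x, g x ≠ ∞) :
    1 ≤ 2 * L * μ {y | (⨆ x, g x) / (2 * K) ≤ g y} := by
  set M := ⨆ x, g x
  set t := M / (2 * K) with t_def
  set S := {y | t ≤ g y}
  have hS : MeasurableSet S := measurableSet_le measurable_const hg
  have ht : t ≠ ∞ := ENNReal.div_ne_top hM (by simpa using hK)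
  have htK : t * K = M * 2⁻¹ := by
    rw [t_def, mul_comm 2, div_eq_mul_inv, ENNReal.mul_inv (by simp) (by simp), ← mul_assoc,
      mul_right_comm, mul_assoc M, ENNReal.inv_mul_cancel (by simpa using hK) (by simp), mul_one]
  have split_at_level : ∀ x y, g y * k x y ≤ t * k x y + S.indicator (fun _ ↦ M * L) y := by
    intro x y
    by_cases hy : y ∈ S
    · rw [Set.indicator_of_mem hy]
      exact le_add_of_nonneg_of_le zero_le (mul_le_mul' (le_iSup g y) (hkL x y))
    · rw [Set.indicator_of_notMem hy, add_zero]
      exact mul_le_mul_left (not_le.1 hy).le _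
  have M_le : M * 1 ≤ M * (2⁻¹ + L * μ S) := by
    rw [mul_one]
    refine iSup_le fun x ↦ ?_
    calc g x ≤ ∫⁻ y, g y * k x y ∂μ := hgk x
      _ ≤ ∫⁻ y, t * k x y + S.indicator (fun _ ↦ M * L) y ∂μ := lintegral_mono (split_at_level x)
      _ = t * ∫⁻ y, k x y ∂μ + M * L * μ S := by
        rw [lintegral_add_right _ (measurable_const.indicator hS), lintegral_const_mul' _ _ ht,
          lintegral_indicator_const hS]
      _ ≤ t * K + M * L * μ S := by gcongr; exact hkK x
      _ = M * (2⁻¹ + L * μ S) := by rw [htK]; ring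
  rw [ENNReal.mul_le_mul_iff_right hM0 hM, ← ENNReal.inv_two_add_inv_two,
    ENNReal.add_le_add_iff_left (by simp)] at M_le
  calc (1 : ℝ≥0∞) = 2 * 2⁻¹ := (ENNReal.mul_inv_cancel (by simp) (by simp)).symm
    _ ≤ 2 * (L * μ S) := by gcongr
    _ = 2 * L * μ S := (mul_assoc _ _ _).symm

theorem iSup_rpow_le_of_le_lintegral_kernel (hg : Measurable g) (hK : K ≠ 0)
    (hkK : ∀ x, ∫⁻ y, k x y ∂μ ≤ K) (hkL : ∀ x y, k x y ≤ L)
    (hgk : ∀ x, g x ≤ ∫⁻ y, g y * k x y ∂μ) (hM : ⨆ x, g x ≠ ∞) {p : ℝ} (hp : 0 < p) :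
    (⨆ x, g x) ^ p ≤ (2 * K) ^ p * (2 * L) * ∫⁻ y, g y ^ p ∂μ := by
  rcases eq_or_ne (⨆ x, g x) 0 with hM0 | hM0
  · simp [hM0, hp]
  set t := (⨆ x, g x) / (2 * K)
  have markov : t ^ p * μ {y | t ≤ g y} ≤ ∫⁻ y, g y ^ p ∂μ := by
    simpa only [ENNReal.rpow_le_rpow_iff hp] using
      mul_meas_ge_le_lintegral (μ := μ) (hg.pow_const p) (t ^ p)
  calc (⨆ x, g x) ^ p = (2 * K) ^ p * t ^ p * 1 := by
        rw [← ENNReal.mul_rpow_of_nonneg _ _ hp.le,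
          ENNReal.mul_div_cancel (by simpa using hK) (by finiteness), mul_one]
    _ ≤ (2 * K) ^ p * t ^ p * (2 * L * μ {y | t ≤ g y}) := by
        gcongr
        exact one_le_two_mul_measure_of_le_lintegral_kernel hg hK hkK hkL hgk hM0 hM
    _ = (2 * K) ^ p * (2 * L) * (t ^ p * μ {y | t ≤ g y}) := by ring
    _ ≤ (2 * K) ^ p * (2 * L) * ∫⁻ y, g y ^ p ∂μ := by gcongr

end Kernel

theorem lintegral_comp_smul {V : Type*} [NormedAddCommGroup V] [NormedSpace ℝ V]
    [FiniteDimensional ℝ V] [MeasurableSpace V] [BorelSpace V] (μ : Measure V)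
    [μ.IsAddHaarMeasure] (g : V → ℝ≥0∞) {c : ℝ} (hc : c ≠ 0) :
    ∫⁻ x, g (c • x) ∂μ = ENNReal.ofReal |(c ^ Module.finrank ℝ V)⁻¹| * ∫⁻ x, g x ∂μ := by
  have := (Homeomorph.smulOfNeZero c hc).measurableEmbedding.lintegral_map (μ := μ) g
  simpa [Measure.map_addHaar_smul μ hc] using this.symm

theorem exists_schwartzMap_eqOn_closedBall_one (V : Type*) [NormedAddCommGroup V]
    [NormedSpace ℝ V] [FiniteDimensional ℝ V] (r : ℝ) :
    ∃ φ : 𝓢(V, ℂ), Set.EqOn φ 1 (Metric.closedBall 0 r) := by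
  let b : ContDiffBump (0 : V) := ⟨|r| + 1, |r| + 2, by positivity, by linarith⟩
  have hb : HasCompactSupport (Complex.ofRealCLM ∘ b) := b.hasCompactSupport.comp_left (map_zero _)
  refine ⟨hb.toSchwartzMap (Complex.ofRealCLM.contDiff.comp b.contDiff), fun v hv ↦ ?_⟩
  have hbv : b v = 1 := b.one_of_mem_closedBall <|
    Metric.closedBall_subset_closedBall ((le_abs_self r).trans (by simp [b])) hv
  simp [hbv]

theorem exists_forall_schwartzMap_enorm_le {V E : Type*} [NormedAddCommGroup V] [NormedSpace ℝ V]
    [NormedAddCommGroup E] [NormedSpace ℝ E] (ψ : 𝓢(V, E)) :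
    ∃ L : ℝ≥0, 0 < L ∧ ∀ y, ‖ψ y‖ₑ ≤ L := by
  refine ⟨(SchwartzMap.seminorm ℝ 0 0 ψ).toNNReal + 1, by positivity, fun y ↦ ?_⟩
  rw [enorm_le_coe, ← NNReal.coe_le_coe]
  push_cast
  linarith [ψ.norm_le_seminorm ℝ y, Real.le_coe_toNNReal (SchwartzMap.seminorm ℝ 0 0 ψ)]

section Fourier

open Module Real

variable {V E : Type*} [NormedAddCommGroup V] [InnerProductSpace ℝ V] [FiniteDimensional ℝ V]
  [MeasurableSpace V] [BorelSpace V] [NormedAddCommGroup E] [NormedSpace ℂ E]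

theorem fourier_comp_smul (f : V → E) {c : ℝ} (hc : c ≠ 0) (w : V) :
    𝓕 (fun v ↦ f (c • v)) w = |(c ^ finrank ℝ V)⁻¹| • 𝓕 f (c⁻¹ • w) := by
  rw [fourier_eq, fourier_eq, ← Measure.integral_comp_smul]
  refine integral_congr_ae (.of_forall fun v ↦ ?_)
  simp only [real_inner_smul_left, real_inner_smul_right, inv_mul_cancel_left₀ hc]

theorem fourier_fourierChar_inner_smul (f : V → E) (x w : V) :
    𝓕 (fun v ↦ 𝐞 (inner ℝ v x) • f v) w = 𝓕 f (w - x) := by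
  rw [fourier_eq, fourier_eq]
  refine integral_congr_ae (.of_forall fun v ↦ ?_)
  simp only [smul_smul, ← AddChar.map_add_eq_mul, inner_sub_right]
  ring_nf

theorem integrable_fourierChar_inner_smul {f : V → E} (hf : Integrable f) (x : V) :
    Integrable fun v ↦ 𝐞 (inner ℝ v x) • f v := by
  simpa using (fourierIntegral_convergent_iff (-x)).2 hf

theorem continuous_fourier_of_integrable {f : V → E} (hf : Integrable f) : Continuous (𝓕 f) :=
  VectorFourier.fourierIntegral_continuous continuous_fourierChar continuous_inner hf

theorem integral_fourier_smul_eq_integral_smul_fourier [CompleteSpace E] {φ : V → ℂ} {f : V → E}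
    (hφ : Integrable φ) (hf : Integrable f) : ∫ y, 𝓕 φ y • f y = ∫ v, φ v • 𝓕 f v := by
  simpa using! VectorFourier.integral_fourierIntegral_smul_eq_flip (L := innerₗ V)
    continuous_fourierChar continuous_inner hφ hf

/-- A multiplier equal to `1` on the spectrum of `f` does not change `𝓕 f`. -/
theorem eq_integral_fourier_smul_of_eqOn_support_fourier [CompleteSpace E] {f : V → E} {φ : V → ℂ}
    (hf : Continuous f) (hfi : Integrable f) (hfi' : Integrable (𝓕 f)) (hφ : Integrable φ)
    (hφf : Set.EqOn φ 1 (Function.support (𝓕 f))) (x : V) :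
    f x = ∫ y, 𝓕 φ (y - x) • f y := by
  have multiplier_smul : ∀ v, φ v • 𝓕 f v = 𝓕 f v := fun v ↦ by
    by_cases hv : 𝓕 f v = 0
    · rw [hv, smul_zero]
    · rw [hφf hv, Pi.one_apply, one_smul]
  calc f x = 𝓕⁻ (𝓕 f) x := by rw [hf.fourierInv_fourier_eq hfi hfi']
    _ = ∫ v, (𝐞 (inner ℝ v x) • φ v) • 𝓕 f v := by
      simp only [fourierInv_eq, smul_assoc, multiplier_smul]
    _ = ∫ y, 𝓕 (fun v ↦ 𝐞 (inner ℝ v x) • φ v) y • f y :=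
      (integral_fourier_smul_eq_integral_smul_fourier
        (integrable_fourierChar_inner_smul hφ x) hfi).symm
    _ = ∫ y, 𝓕 φ (y - x) • f y := by simp only [fourier_fourierChar_inner_smul]

/-- `f` is band-limited with bandwidth `r`: its Fourier transform vanishes outside the closed ball
of radius `r` about the origin. Continuity and integrability are part of the notion, so that `𝓕 f`
is given by an absolutely convergent integral and Fourier inversion holds at every point. -/
structure IsBandLimited (f : V → E) (r : ℝ) : Prop where
  continuous : Continuous f
  integrable : Integrable f
  support_fourier_subset : Function.support (𝓕 f) ⊆ Metric.closedBall 0 r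

namespace IsBandLimited

variable {f : V → E} {r : ℝ}

theorem integrable_fourier (hf : IsBandLimited f r) : Integrable (𝓕 f) :=
  (continuous_fourier_of_integrable hf.integrable).integrable_of_hasCompactSupport <|
    .of_support_subset_isCompact (isCompact_closedBall 0 r) hf.support_fourier_subset

theorem comp_smul (hf : IsBandLimited f r) {c : ℝ} (hc : 0 < c) :
    IsBandLimited (fun x ↦ f (c • x)) (c * r) where
  continuous := hf.continuous.comp (continuous_const_smul c)
  integrable := hf.integrable.comp_smul hc.ne'
  support_fourier_subset v hv := by
    have hv' : c⁻¹ • v ∈ Function.support (𝓕 f) := fun h ↦ hv <| by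
      rw [fourier_comp_smul f hc.ne', h, smul_zero]
    have := hf.support_fourier_subset hv'
    rwa [mem_closedBall_zero_iff, norm_smul, norm_inv, norm_of_nonneg hc.le,
      inv_mul_le_iff₀ hc, ← mem_closedBall_zero_iff] at this

theorem iSup_enorm_ne_top [CompleteSpace E] (hf : IsBandLimited f r) : ⨆ x, ‖f x‖ₑ ≠ ∞ := by
  refine ne_top_of_le_ne_top hf.integrable_fourier.hasFiniteIntegral.ne (iSup_le fun x ↦ ?_)
  calc ‖f x‖ₑ = ‖∫ v, 𝐞 (inner ℝ v x) • 𝓕 f v‖ₑ := by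
        rw [← fourierInv_eq,
          hf.continuous.fourierInv_fourier_eq hf.integrable hf.integrable_fourier]
    _ ≤ ∫⁻ v, ‖𝐞 (inner ℝ v x) • 𝓕 f v‖ₑ := enorm_integral_le_lintegral_enorm _
    _ = ∫⁻ v, ‖𝓕 f v‖ₑ := by simp only [← ofReal_norm, Circle.norm_smul]

end IsBandLimited

variable (V E) in
theorem exists_forall_isBandLimited_enorm_le_lintegral_mul [CompleteSpace E] (r : ℝ) :
    ∃ ψ : 𝓢(V, ℂ), ∀ f : V → E, IsBandLimited f r →
      ∀ x, ‖f x‖ₑ ≤ ∫⁻ y, ‖f y‖ₑ * ‖ψ (y - x)‖ₑ := by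
  obtain ⟨φ, hφ⟩ := exists_schwartzMap_eqOn_closedBall_one V r
  refine ⟨𝓕 φ, fun f hf x ↦ ?_⟩
  calc ‖f x‖ₑ = ‖∫ y, 𝓕 (φ : V → ℂ) (y - x) • f y‖ₑ := by
        rw [← eq_integral_fourier_smul_of_eqOn_support_fourier hf.continuous hf.integrable
          hf.integrable_fourier φ.integrable (hφ.mono hf.support_fourier_subset)]
    _ ≤ ∫⁻ y, ‖𝓕 (φ : V → ℂ) (y - x) • f y‖ₑ := enorm_integral_le_lintegral_enorm _
    _ = ∫⁻ y, ‖f y‖ₑ * ‖𝓕 φ (y - x)‖ₑ := by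
        simp only [enorm_smul, mul_comm, SchwartzMap.fourier_coe]

variable (V E) in
theorem exists_forall_isBandLimited_enorm_rpow_le [CompleteSpace E] (r : ℝ) {p : ℝ} (hp : 0 < p) :
    ∃ C : ℝ≥0, 0 < C ∧ ∀ f : V → E, IsBandLimited f r →
      ∀ x, ‖f x‖ₑ ^ p ≤ C * ∫⁻ y, ‖f y‖ₑ ^ p := by
  obtain ⟨ψ, hψ⟩ := exists_forall_isBandLimited_enorm_le_lintegral_mul V E r
  obtain ⟨L, hL, ψ_le⟩ := exists_forall_schwartzMap_enorm_le ψ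
  obtain ⟨K, hK, lintegral_ψ_le⟩ : ∃ K : ℝ≥0, 0 < K ∧ ∫⁻ y, ‖ψ y‖ₑ ≤ K := by
    refine ⟨(∫⁻ y, ‖ψ y‖ₑ).toNNReal + 1, by positivity, ?_⟩
    rw [ENNReal.coe_add, ENNReal.coe_toNNReal ψ.integrable.hasFiniteIntegral.ne]
    exact le_self_add
  refine ⟨(2 * K) ^ p * (2 * L), by positivity, fun f hf x ↦ ?_⟩
  calc ‖f x‖ₑ ^ p ≤ (⨆ x, ‖f x‖ₑ) ^ p := by gcongr; exact le_iSup (‖f ·‖ₑ) x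
    _ ≤ (2 * K) ^ p * (2 * L) * ∫⁻ y, ‖f y‖ₑ ^ p :=
      iSup_rpow_le_of_le_lintegral_kernel (k := fun x y ↦ ‖ψ (y - x)‖ₑ)
        hf.continuous.enorm.measurable hK.ne'
        (fun x ↦ (lintegral_sub_right_eq_self (‖ψ ·‖ₑ) x).trans_le lintegral_ψ_le)
        (fun x y ↦ ψ_le (y - x)) (hψ f hf) hf.iSup_enorm_ne_top hp
    _ = ((2 * K) ^ p * (2 * L) : ℝ≥0) * ∫⁻ y, ‖f y‖ₑ ^ p := by
      push_cast [ENNReal.coe_rpow_of_nonneg _ hp.le]; rfl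

variable (V E) in
theorem exists_forall_isBandLimited_enorm_le [CompleteSpace E] (r : ℝ) {p : ℝ} (hp : 0 < p) :
    ∃ C : ℝ≥0, 0 < C ∧ ∀ (R : ℝ≥0) (f : V → E), 0 < R → IsBandLimited f (r * R) →
      ∀ x, ‖f x‖ₑ ≤ R ^ (finrank ℝ V / p) * (C * (∫⁻ y, ‖f y‖ₑ ^ p) ^ (1 / p)) := by
  obtain ⟨C, hC, hCf⟩ := exists_forall_isBandLimited_enorm_rpow_le V E r hp
  refine ⟨C ^ (1 / p), by positivity, fun R f hR hf x ↦ ?_⟩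
  have hR' : (0 : ℝ) < R := hR
  have hfR : IsBandLimited (fun y ↦ f ((R : ℝ)⁻¹ • y)) r := by
    simpa [mul_comm r, hR'.ne'] using hf.comp_smul (inv_pos.2 hR')
  have rpow_le : ‖f x‖ₑ ^ p ≤ C * (R ^ finrank ℝ V * ∫⁻ y, ‖f y‖ₑ ^ p) := by
    have h := hCf _ hfR ((R : ℝ) • x)
    rw [inv_smul_smul₀ hR'.ne', lintegral_comp_smul volume (‖f ·‖ₑ ^ p) (inv_ne_zero hR'.ne'),
      inv_pow, inv_inv, abs_of_nonneg (by positivity), ENNReal.ofReal_pow hR'.le,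
      ENNReal.ofReal_coe_nnreal] at h
    exact h
  calc ‖f x‖ₑ = (‖f x‖ₑ ^ p) ^ (1 / p) := by rw [one_div, ENNReal.rpow_rpow_inv hp.ne']
    _ ≤ (C * (R ^ finrank ℝ V * ∫⁻ y, ‖f y‖ₑ ^ p)) ^ (1 / p) := by gcongr
    _ = R ^ (finrank ℝ V / p) * ((C ^ (1 / p) : ℝ≥0) * (∫⁻ y, ‖f y‖ₑ ^ p) ^ (1 / p)) := by
      have hp' : 0 ≤ 1 / p := by positivity
      rw [ENNReal.mul_rpow_of_nonneg _ _ hp', ENNReal.mul_rpow_of_nonneg _ _ hp',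
        ← ENNReal.rpow_natCast, ← ENNReal.rpow_mul, mul_one_div,
        ENNReal.coe_rpow_of_nonneg _ hp', mul_left_comm]

end Fourier

theorem exists_two_rpow_eq {x : ℝ≥0∞} (hx₀ : x ≠ 0) (hx : x ≠ ∞) : ∃ u : ℝ, 2 ^ u = x := by
  refine ⟨Real.logb 2 x.toReal, ?_⟩
  rw [← ENNReal.ofReal_ofNat, ENNReal.ofReal_rpow_of_pos two_pos,
    Real.rpow_logb two_pos (by norm_num) (ENNReal.toReal_pos hx₀ hx), ENNReal.ofReal_toReal hx]

theorem tsum_int_two_rpow_neg_mul_abs_ne_top {γ : ℝ} (hγ : 0 < γ) :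
    ∑' k : ℤ, (2 : ℝ≥0∞) ^ (-(γ * |(k : ℝ)|)) ≠ ∞ := by
  have geometric : ∑' k : ℕ, (2 : ℝ≥0∞) ^ (-(γ * k)) ≠ ∞ := by
    simp_rw [← neg_mul, ENNReal.rpow_mul, ENNReal.rpow_natCast]
    exact (tsum_geometric_lt_top.2 <|
      ENNReal.rpow_lt_one_of_one_lt_of_neg ENNReal.one_lt_two (neg_lt_zero.2 hγ)).ne
  rw [tsum_of_nat_of_neg_add_one ENNReal.summable ENNReal.summable]
  refine ENNReal.add_ne_top.2 ⟨by simpa using geometric, ?_⟩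
  refine ne_top_of_le_ne_top geometric (ENNReal.tsum_le_tsum fun k ↦ ?_)
  refine ENNReal.rpow_le_rpow_of_exponent_le one_le_two (neg_le_neg ?_)
  gcongr
  push_cast
  rw [abs_neg, abs_of_nonneg (by positivity)]
  linarith

theorem exists_forall_tsum_two_rpow_neg_mul_abs_sub_le {γ : ℝ} (hγ : 0 < γ) :
    ∃ C : ℝ≥0, 0 < C ∧ ∀ τ : ℝ, ∑' j : ℕ, (2 : ℝ≥0∞) ^ (-(γ * |j - τ|)) ≤ C := by
  set Z := ∑' k : ℤ, (2 : ℝ≥0∞) ^ (-(γ * |(k : ℝ)|))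
  have hZ : Z ≠ ∞ := tsum_int_two_rpow_neg_mul_abs_ne_top hγ
  have hZ0 : Z ≠ 0 := fun h ↦ by simpa using ENNReal.tsum_eq_zero.1 h 0
  refine ⟨(2 ^ γ * Z).toNNReal, ENNReal.toNNReal_pos (mul_ne_zero (by simp) hZ0) (by finiteness),
    fun τ ↦ ?_⟩
  have shift : ∀ j : ℕ, |(((j : ℤ) - ⌊τ⌋ : ℤ) : ℝ)| ≤ |(j : ℝ) - τ| + 1 := fun j ↦
    calc |(((j : ℤ) - ⌊τ⌋ : ℤ) : ℝ)| = |(j - τ) + Int.fract τ| := by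
          rw [Int.fract]; push_cast; ring_nf
      _ ≤ |j - τ| + |Int.fract τ| := abs_add_le _ _
      _ ≤ |j - τ| + 1 := by rw [Int.abs_fract]; gcongr; exact (Int.fract_lt_one τ).le
  rw [ENNReal.coe_toNNReal (by finiteness)]
  calc ∑' j : ℕ, (2 : ℝ≥0∞) ^ (-(γ * |j - τ|))
      ≤ ∑' j : ℕ, 2 ^ γ * (2 : ℝ≥0∞) ^ (-(γ * |(((j : ℤ) - ⌊τ⌋ : ℤ) : ℝ)|)) := by
        refine ENNReal.tsum_le_tsum fun j ↦ ?_
        rw [← ENNReal.rpow_add _ _ two_ne_zero ENNReal.ofNat_ne_top]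
        exact ENNReal.rpow_le_rpow_of_exponent_le one_le_two (by nlinarith [shift j])
    _ ≤ 2 ^ γ * Z := by
        rw [ENNReal.tsum_mul_left]
        gcongr
        exact ENNReal.tsum_comp_le_tsum_of_injective
          (f := fun j : ℕ ↦ (j : ℤ) - ⌊τ⌋) (fun a b h ↦ by simpa using h) _

theorem min_sub_mul_le (θ τ x : ℝ) :
    min τ x - (1 - θ) * x ≤ θ * τ - min θ (1 - θ) * |x - τ| := by
  rcases le_total τ x with hx | hx
  · rw [min_eq_left hx, abs_of_nonneg (sub_nonneg.2 hx)]
    linarith [mul_le_mul_of_nonneg_right (min_le_right θ (1 - θ)) (sub_nonneg.2 hx)]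
  · rw [min_eq_right hx, abs_of_nonpos (sub_nonpos.2 hx)]
    linarith [mul_le_mul_of_nonneg_right (min_le_left θ (1 - θ)) (sub_nonneg.2 hx)]

theorem two_rpow_mul_le_of_le_of_le {σ : ℝ} (hσ : 0 ≤ σ) (θ v τ x : ℝ) {b : ℝ≥0∞}
    (hτ : b ≤ 2 ^ (v + σ * τ)) (hx : b ≤ 2 ^ (v + σ * x)) :
    2 ^ (-((1 - θ) * σ * x)) * b ≤
      2 ^ (v + θ * σ * τ) * 2 ^ (-(σ * min θ (1 - θ) * |x - τ|)) := by
  have b_le : b ≤ 2 ^ (v + σ * min τ x) := by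
    rcases min_choice τ x with h | h <;> rwa [h]
  calc 2 ^ (-((1 - θ) * σ * x)) * b
      ≤ 2 ^ (-((1 - θ) * σ * x)) * 2 ^ (v + σ * min τ x) := by gcongr
    _ = 2 ^ (v + σ * (min τ x - (1 - θ) * x)) := by
      rw [← ENNReal.rpow_add _ _ two_ne_zero ENNReal.ofNat_ne_top]; ring_nf
    _ ≤ 2 ^ (v + σ * (θ * τ - min θ (1 - θ) * |x - τ|)) := by
      refine ENNReal.rpow_le_rpow_of_exponent_le one_le_two ?_
      exact add_le_add_right (mul_le_mul_of_nonneg_left (min_sub_mul_le θ τ x) hσ) v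
    _ = 2 ^ (v + θ * σ * τ) * 2 ^ (-(σ * min θ (1 - θ) * |x - τ|)) := by
      rw [← ENNReal.rpow_add _ _ two_ne_zero ENNReal.ofNat_ne_top]; ring_nf

theorem tsum_two_rpow_mul_rpow_le {σ q : ℝ} (hσ : 0 ≤ σ) (hq : 0 ≤ q) (θ v τ : ℝ)
    {b : ℕ → ℝ≥0∞} (hτ : ∀ j, b j ≤ 2 ^ (v + σ * τ)) (hb : ∀ j : ℕ, b j ≤ 2 ^ (v + σ * j)) :
    ∑' j : ℕ, (2 ^ (-((1 - θ) * σ * j)) * b j) ^ q ≤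
      (2 ^ (v + θ * σ * τ)) ^ q * ∑' j : ℕ, 2 ^ (-(σ * min θ (1 - θ) * q * |j - τ|)) := by
  rw [← ENNReal.tsum_mul_left]
  refine ENNReal.tsum_le_tsum fun j ↦ ?_
  grw [two_rpow_mul_le_of_le_of_le hσ θ v τ j (hτ j) (hb j)]
  rw [ENNReal.mul_rpow_of_nonneg _ _ hq, ← ENNReal.rpow_mul 2 (-_) q, neg_mul,
    mul_right_comm _ _ q]

theorem exists_forall_tsum_two_rpow_mul_rpow_le {σ θ q : ℝ} (hσ : 0 < σ) (hθ₀ : 0 < θ)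
    (hθ₁ : θ < 1) (hq : 0 < q) :
    ∃ C : ℝ≥0, 0 < C ∧ ∀ (F N : ℝ≥0∞) (b : ℕ → ℝ≥0∞),
      (∀ j, b j ≤ F) → (∀ j : ℕ, b j ≤ 2 ^ (σ * j) * N) →
      (∑' j : ℕ, (2 ^ (-((1 - θ) * σ * j)) * b j) ^ q) ^ (1 / q) ≤ C * (F ^ θ * N ^ (1 - θ)) := by
  have hθ₁' : 0 < 1 - θ := sub_pos.2 hθ₁
  obtain ⟨C, hC, tsum_le⟩ := exists_forall_tsum_two_rpow_neg_mul_abs_sub_le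
    (γ := σ * min θ (1 - θ) * q) (by positivity)
  refine ⟨C ^ (1 / q), by positivity, fun F N b hF hN ↦ ?_⟩
  have hC' : ((C ^ (1 / q) : ℝ≥0) : ℝ≥0∞) ≠ 0 := by
    exact_mod_cast (NNReal.rpow_pos hC).ne'
  by_cases hb : b = 0
  · simp [hb, hq]
  obtain ⟨i, hi⟩ := Function.ne_iff.1 hb
  have hF₀ : F ≠ 0 := fun h ↦ hi (by simpa [h] using hF i)
  have hN₀ : N ≠ 0 := fun h ↦ hi (by simpa [h] using hN i)
  rcases eq_or_ne F ∞ with rfl | hF'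
  · rw [ENNReal.top_rpow_of_pos hθ₀, ENNReal.top_mul (by simp [hN₀, hθ₁'.not_gt]),
      ENNReal.mul_top hC']
    exact le_top
  rcases eq_or_ne N ∞ with rfl | hN'
  · rw [ENNReal.top_rpow_of_pos hθ₁', ENNReal.mul_top (by simp [hF₀, hθ₀.le]),
      ENNReal.mul_top hC']
    exact le_top
  obtain ⟨u, rfl⟩ := exists_two_rpow_eq hF₀ hF'
  obtain ⟨v, rfl⟩ := exists_two_rpow_eq hN₀ hN'
  obtain ⟨τ, rfl⟩ : ∃ τ, u = v + σ * τ := ⟨(u - v) / σ, by field_simp; ring⟩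
  simp only [← ENNReal.rpow_add _ _ two_ne_zero ENNReal.ofNat_ne_top, add_comm _ v] at hN
  calc (∑' j : ℕ, (2 ^ (-((1 - θ) * σ * j)) * b j) ^ q) ^ (1 / q)
      ≤ ((2 ^ (v + θ * σ * τ)) ^ q * (C : ℝ≥0∞)) ^ (1 / q) := by
        grw [tsum_two_rpow_mul_rpow_le hσ.le hq.le θ v τ hF hN, tsum_le]
    _ = (C ^ (1 / q) : ℝ≥0) * 2 ^ (v + θ * σ * τ) := by
        rw [ENNReal.mul_rpow_of_nonneg _ _ (by positivity), one_div,
          ENNReal.rpow_rpow_inv hq.ne', ENNReal.coe_rpow_of_nonneg _ (by positivity), mul_comm]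
    _ = (C ^ (1 / q) : ℝ≥0) * ((2 ^ (v + σ * τ)) ^ θ * (2 ^ v) ^ (1 - θ)) := by
        rw [← ENNReal.rpow_mul, ← ENNReal.rpow_mul,
          ← ENNReal.rpow_add _ _ two_ne_zero ENNReal.ofNat_ne_top]
        ring_nf

section LpQuasinorm

variable {X : Type*} [MeasurableSpace X] {μ : Measure X} {F G : X → ℝ≥0∞} {B : ℝ≥0∞} {p : ℝ}

theorem mul_lintegral_rpow_le_of_mul_le (hp : 0 < p) (hB : B ≠ ∞) (hGF : ∀ x, B * G x ≤ F x) :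
    B * (∫⁻ x, G x ^ p ∂μ) ^ (1 / p) ≤ (∫⁻ x, F x ^ p ∂μ) ^ (1 / p) :=
  calc B * (∫⁻ x, G x ^ p ∂μ) ^ (1 / p) = (∫⁻ x, (B * G x) ^ p ∂μ) ^ (1 / p) := by
        simp only [ENNReal.mul_rpow_of_nonneg _ _ hp.le]
        rw [lintegral_const_mul' _ _ (by finiteness),
          ENNReal.mul_rpow_of_nonneg _ _ (by positivity), one_div, ENNReal.rpow_rpow_inv hp.ne']
    _ ≤ (∫⁻ x, F x ^ p ∂μ) ^ (1 / p) := by gcongr; exact hGF _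

theorem lintegral_rpow_le_of_le_mul_rpow_div (hp : 0 < p) {p₀ : ℝ} (hF : AEMeasurable F μ)
    (hGF : ∀ x, G x ≤ B * F x ^ (p₀ / p)) :
    (∫⁻ x, G x ^ p ∂μ) ^ (1 / p) ≤ B * (∫⁻ x, F x ^ p₀ ∂μ) ^ (1 / p) :=
  calc (∫⁻ x, G x ^ p ∂μ) ^ (1 / p) ≤ (∫⁻ x, (B * F x ^ (p₀ / p)) ^ p ∂μ) ^ (1 / p) := by
        gcongr; exact hGF _
    _ = (B ^ p * ∫⁻ x, F x ^ p₀ ∂μ) ^ (1 / p) := by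
        simp only [ENNReal.mul_rpow_of_nonneg _ _ hp.le, ← ENNReal.rpow_mul,
          div_mul_cancel₀ _ hp.ne']
        rw [lintegral_const_mul'' _ (hF.pow_const p₀)]
    _ = B * (∫⁻ x, F x ^ p₀ ∂μ) ^ (1 / p) := by
        rw [ENNReal.mul_rpow_of_nonneg _ _ (by positivity), one_div, ENNReal.rpow_rpow_inv hp.ne']

end LpQuasinorm

section SobolevEmbedding

open Module

variable (V E : Type*) [NormedAddCommGroup V] [InnerProductSpace ℝ V] [FiniteDimensional ℝ V]
  [MeasurableSpace V] [BorelSpace V] [NormedAddCommGroup E] [NormedSpace ℂ E] [CompleteSpace E]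

theorem exists_forall_two_rpow_mul_enorm_le (A s₀ : ℝ) {p₀ : ℝ} (hp₀ : 0 < p₀) :
    ∃ C : ℝ≥0, 0 < C ∧ ∀ f : ℕ → V → E, (∀ j : ℕ, IsBandLimited (f j) (A * 2 ^ (j : ℝ))) →
      ∀ (j : ℕ) (x : V), 2 ^ (s₀ * j) * ‖f j x‖ₑ ≤ 2 ^ (finrank ℝ V / p₀ * j) *
        (C * (∫⁻ y, (⨆ i : ℕ, 2 ^ (s₀ * i) * ‖f i y‖ₑ) ^ p₀) ^ (1 / p₀)) := by
  obtain ⟨C, hC, nikolskii⟩ := exists_forall_isBandLimited_enorm_le V E A hp₀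
  refine ⟨C, hC, fun f hf j x ↦ ?_⟩
  have hfj : IsBandLimited (f j) (A * (2 ^ (j : ℝ) : ℝ≥0)) := by simpa using hf j
  have two_rpow : ((2 ^ (j : ℝ) : ℝ≥0) : ℝ≥0∞) ^ (finrank ℝ V / p₀) =
      2 ^ (finrank ℝ V / p₀ * j) := by
    rw [ENNReal.coe_rpow_of_nonneg _ (by positivity), ← ENNReal.rpow_mul, mul_comm]; rfl
  calc 2 ^ (s₀ * j) * ‖f j x‖ₑ
      ≤ 2 ^ (s₀ * j) * (2 ^ (finrank ℝ V / p₀ * j) *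
          (C * (∫⁻ y, ‖f j y‖ₑ ^ p₀) ^ (1 / p₀))) := by
        grw [nikolskii _ _ (by positivity) hfj x, two_rpow]
    _ = 2 ^ (finrank ℝ V / p₀ * j) *
          (C * (2 ^ (s₀ * j) * (∫⁻ y, ‖f j y‖ₑ ^ p₀) ^ (1 / p₀))) := by ring
    _ ≤ _ := by
        gcongr
        exact mul_lintegral_rpow_le_of_mul_le hp₀ (by finiteness)
          fun y ↦ le_iSup (fun i : ℕ ↦ (2 : ℝ≥0∞) ^ (s₀ * i) * ‖f i y‖ₑ) j

variable [Nontrivial V] {s s₀ p p₀ q : ℝ}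

theorem exists_forall_tsum_two_rpow_mul_enorm_rpow_le (hp₀ : 0 < p₀) (hpp : p₀ < p)
    (hsob : s - finrank ℝ V / p = s₀ - finrank ℝ V / p₀) (hq : 0 < q) (A : ℝ) :
    ∃ C : ℝ≥0, 0 < C ∧ ∀ f : ℕ → V → E, (∀ j : ℕ, IsBandLimited (f j) (A * 2 ^ (j : ℝ))) →
      ∀ x, (∑' j : ℕ, (2 ^ (s * j) * ‖f j x‖ₑ) ^ q) ^ (1 / q) ≤
        C * ((∫⁻ y, (⨆ j : ℕ, 2 ^ (s₀ * j) * ‖f j y‖ₑ) ^ p₀) ^ (1 / p₀)) ^ (1 - p₀ / p) *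
          (⨆ j : ℕ, 2 ^ (s₀ * j) * ‖f j x‖ₑ) ^ (p₀ / p) := by
  have hp : 0 < p := hp₀.trans hpp
  have hθ : 0 < 1 - p₀ / p := sub_pos.2 ((div_lt_one hp).2 hpp)
  have hσ : 0 < finrank ℝ V / p₀ := div_pos (Nat.cast_pos.2 finrank_pos) hp₀
  obtain ⟨C₁, hC₁, le_norm⟩ := exists_forall_two_rpow_mul_enorm_le V E A s₀ hp₀
  obtain ⟨C₂, hC₂, interpolation⟩ :=
    exists_forall_tsum_two_rpow_mul_rpow_le hσ (div_pos hp₀ hp) (sub_pos.1 hθ) hq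
  refine ⟨C₂ * C₁ ^ (1 - p₀ / p), by positivity, fun f hf x ↦ ?_⟩
  have weight_eq (j : ℕ) : (2 : ℝ≥0∞) ^ (s * j) * ‖f j x‖ₑ =
      2 ^ (-((1 - p₀ / p) * (finrank ℝ V / p₀) * j)) * (2 ^ (s₀ * j) * ‖f j x‖ₑ) := by
    rw [← mul_assoc, ← ENNReal.rpow_add _ _ two_ne_zero ENNReal.ofNat_ne_top,
      show s = s₀ - (1 - p₀ / p) * (finrank ℝ V / p₀) by field_simp at hsob ⊢; linarith]
    ring_nf
  simp only [weight_eq]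
  refine (interpolation _ _ _ (le_iSup fun j : ℕ ↦ 2 ^ (s₀ * j) * ‖f j x‖ₑ)
    (le_norm f hf · x)).trans_eq ?_
  rw [ENNReal.mul_rpow_of_nonneg _ _ hθ.le, ENNReal.coe_mul, ENNReal.coe_rpow_of_nonneg _ hθ.le]
  ring

theorem stmt9_general (hp₀ : 0 < p₀) (hpp : p₀ < p)
    (hsob : s - finrank ℝ V / p = s₀ - finrank ℝ V / p₀) (hq : 0 < q) (A : ℝ) :
    ∃ C : ℝ≥0, 0 < C ∧ ∀ f : ℕ → V → E, (∀ j : ℕ, IsBandLimited (f j) (A * 2 ^ (j : ℝ))) →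
      (∫⁻ x, (∑' j : ℕ, (2 ^ (s * j) * ‖f j x‖ₑ) ^ q) ^ (p / q)) ^ (1 / p) ≤
        C * (∫⁻ x, (⨆ j : ℕ, 2 ^ (s₀ * j) * ‖f j x‖ₑ) ^ p₀) ^ (1 / p₀) := by
  have hp : 0 < p := hp₀.trans hpp
  have hθ : 0 ≤ 1 - p₀ / p := sub_nonneg.2 ((div_le_one hp).2 hpp.le)
  obtain ⟨C, hC, pointwise⟩ :=
    exists_forall_tsum_two_rpow_mul_enorm_rpow_le V E hp₀ hpp hsob hq A
  refine ⟨C, hC, fun f hf ↦ ?_⟩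
  set F : V → ℝ≥0∞ := fun x ↦ ⨆ j : ℕ, 2 ^ (s₀ * j) * ‖f j x‖ₑ
  set M := (∫⁻ x, F x ^ p₀) ^ (1 / p₀) with M_def
  have hF : Measurable F := .iSup fun j ↦ (hf j).continuous.enorm.measurable.const_mul _
  calc (∫⁻ x, (∑' j : ℕ, (2 ^ (s * j) * ‖f j x‖ₑ) ^ q) ^ (p / q)) ^ (1 / p)
      = (∫⁻ x, ((∑' j : ℕ, (2 ^ (s * j) * ‖f j x‖ₑ) ^ q) ^ (1 / q)) ^ p) ^ (1 / p) := by
        simp only [← ENNReal.rpow_mul, one_div_mul_eq_div]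
    _ ≤ C * M ^ (1 - p₀ / p) * (∫⁻ x, F x ^ p₀) ^ (1 / p) :=
        lintegral_rpow_le_of_le_mul_rpow_div hp hF.aemeasurable (pointwise f hf)
    _ = C * (M ^ (1 - p₀ / p) * M ^ (p₀ / p)) := by
        rw [M_def, ← ENNReal.rpow_mul _ _ (p₀ / p), show 1 / p₀ * (p₀ / p) = 1 / p by field_simp,
          mul_assoc]
    _ = C * M := by
        rw [← ENNReal.rpow_add_of_nonneg _ _ hθ (by positivity), sub_add_cancel, ENNReal.rpow_one]

end SobolevEmbedding

/-- Sobolev embedding inequality for Lizorkin–Triebel quasi-norms of band-limited sequences: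
if `s - n/p = s₀ - n/p₀` with `0 < p₀ < p < ∞` and `supp 𝓕f_j ⊆ B(0, A·2^j)`, then
`‖(∑_j 2^{sjq}|f_j|^q)^{1/q}‖_p ≤ C ‖sup_j 2^{s₀j}|f_j|‖_{p₀}`. -/
theorem stmt9 (n : ℕ) (hn : 1 ≤ n) (s s₀ p p₀ : ℝ) (hp₀ : 0 < p₀) (hpp : p₀ < p)
    (hsob : s - n / p = s₀ - n / p₀) (q : ℝ) (hq : 0 < q) (A : ℝ) (hA : 0 < A) :
    ∃ C : ℝ≥0∞, 0 < C ∧ C ≠ ∞ ∧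
      ∀ f : ℕ → 𝓢(EuclideanSpace ℝ (Fin n), ℂ),
        (∀ j : ℕ, Function.support (𝓕 (f j : EuclideanSpace ℝ (Fin n) → ℂ))
          ⊆ Metric.closedBall 0 (A * 2 ^ (j:ℝ))) →
        (∫⁻ x : EuclideanSpace ℝ (Fin n),
            (∑' j : ℕ, ((2:ℝ≥0∞) ^ (s * (j:ℝ)) * ‖f j x‖₊) ^ q) ^ (p / q)) ^ (1 / p)
          ≤ C * (∫⁻ x : EuclideanSpace ℝ (Fin n),
              (⨆ j : ℕ, (2:ℝ≥0∞) ^ (s₀ * (j:ℝ)) * ‖f j x‖₊) ^ p₀) ^ (1 / p₀) := by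
  have : Nonempty (Fin n) := ⟨⟨0, hn⟩⟩
  obtain ⟨C, hC, hCf⟩ :=
    stmt9_general (EuclideanSpace ℝ (Fin n)) ℂ hp₀ hpp (by simpa using hsob) hq A
  exact ⟨C, by simpa using hC, ENNReal.coe_ne_top,
    fun f hf ↦ hCf (fun j ↦ f j) fun j ↦ ⟨(f j).continuous, (f j).integrable, hf j⟩⟩
end

section
/- (Sobolev embedding inequality for Besov quasi-norms of band-limited sequences.) Let n ≥ 1, let s, s₀ ∈ ℝ and 0 < p₀ ≤ p < ∞ satisfy s − n/p = s₀ − n/p₀, let 0 < q < ∞ and A > 0. Then there exists a constant C > 0 such that for every sequence (f_j)_{j∈ℕ} of Schwartz functions on ℝⁿ with supp 𝓕f_j contained in the closed ball of radius A·2^j about the origin, one has (∑_{j=0}^∞ (2^{s j} ‖f_j‖_p)^q)^{1/q} ≤ C · (∑_{j=0}^∞ (2^{s₀ j} ‖f_j‖_{p₀})^q)^{1/q}, where both sides may be infinite. -/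
open scoped ENNReal NNReal FourierTransform SchwartzMap
open MeasureTheory
open scoped Convolution

/-!
A function band-limited to the unit ball equals its convolution with a fixed Schwartz function `φ`
such that `𝓕 φ = 1` on that ball. For `p₀ ≥ 1`, Hölder's inequality turns this into
`‖f‖_∞ ≤ ‖φ‖_{p₀'} ‖f‖_{p₀}`. For `p₀ < 1` one starts from `‖f‖_∞ ≤ ‖φ‖_∞ ‖f‖_1`, interpolates
`‖f‖_1 ≤ ‖f‖_∞^{1-p₀} ‖f‖_{p₀}^{p₀}` and absorbs the finite factor `‖f‖_∞^{1-p₀}` into the left-hand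
side. Interpolating once more between `p₀` and `∞` gives the bound of `‖f‖_p` by `‖f‖_{p₀}`, and a
dilation extends it to the ball of radius `R` at the cost of `R^{n/p₀ - n/p}`. For `R = A 2^j` this
factor is `A^{s₀-s} 2^{(s₀-s)j}`, exactly the ratio of the two Besov weights up to a constant.
-/

lemma ennreal_le_rpow_inv_mul_of_le_mul_rpow_mul_rpow {a b c : ℝ≥0∞} {θ : ℝ} (ha : a ≠ ∞)
    (hθ : 0 < θ) (hθ_le : θ ≤ 1) (h : a ≤ c * (a ^ (1 - θ) * b ^ θ)) : a ≤ c ^ θ⁻¹ * b := by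
  rcases eq_or_ne a 0 with rfl | ha₀
  · exact zero_le
  have hpow_ne_zero : a ^ (1 - θ) ≠ 0 := by simp [ENNReal.rpow_eq_zero_iff, ha₀, ha]
  have hpow_ne_top : a ^ (1 - θ) ≠ ∞ := ENNReal.rpow_ne_top_of_nonneg (by linarith) ha
  have absorbed : a ^ θ ≤ c * b ^ θ := by
    refine (ENNReal.mul_le_mul_iff_right hpow_ne_zero hpow_ne_top).1 ?_
    calc a ^ (1 - θ) * a ^ θ = a := by
          rw [← ENNReal.rpow_add_of_nonneg _ _ (by linarith) hθ.le, sub_add_cancel,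
            ENNReal.rpow_one]
      _ ≤ c * (a ^ (1 - θ) * b ^ θ) := h
      _ = a ^ (1 - θ) * (c * b ^ θ) := mul_left_comm _ _ _
  calc a = (a ^ θ) ^ θ⁻¹ := (ENNReal.rpow_rpow_inv hθ.ne' a).symm
    _ ≤ (c * b ^ θ) ^ θ⁻¹ := by gcongr
    _ = c ^ θ⁻¹ * b := by
      rw [ENNReal.mul_rpow_of_nonneg _ _ (inv_nonneg.2 hθ.le), ENNReal.rpow_rpow_inv hθ.ne']

lemma tsum_rpow_rpow_le_mul_tsum_rpow_rpow {ι : Type*} {a b : ι → ℝ≥0∞} {C : ℝ≥0∞} {q : ℝ}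
    (hq : 0 < q) (h : ∀ i, a i ≤ C * b i) :
    (∑' i, a i ^ q) ^ (1 / q) ≤ C * (∑' i, b i ^ q) ^ (1 / q) :=
  calc (∑' i, a i ^ q) ^ (1 / q) ≤ (∑' i, (C * b i) ^ q) ^ (1 / q) := by
        gcongr with i
        exact h i
    _ = C * (∑' i, b i ^ q) ^ (1 / q) := by
      simp_rw [ENNReal.mul_rpow_of_nonneg C _ hq.le]
      rw [ENNReal.tsum_mul_left, ENNReal.mul_rpow_of_nonneg _ _ (by positivity), one_div,
        ENNReal.rpow_rpow_inv hq.ne']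

section LpNorm

variable {α E : Type*} [MeasurableSpace α] {μ : Measure α} [NormedAddCommGroup E] {f : α → E}

lemma eLpNorm_ofReal_eq_lintegral (f : α → E) {p : ℝ} (hp : 0 < p) :
    eLpNorm f (ENNReal.ofReal p) μ = (∫⁻ x, (‖f x‖₊ : ℝ≥0∞) ^ p ∂μ) ^ (1 / p) := by
  rw [eLpNorm_eq_lintegral_rpow_enorm_toReal (by simpa) ENNReal.ofReal_ne_top,
    ENNReal.toReal_ofReal hp.le]
  rfl

lemma lintegral_enorm_rpow_le_eLpNormEssSup_rpow_mul (hf : AEStronglyMeasurable f μ) {r t : ℝ}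
    (hr : 0 ≤ r) (hrt : r ≤ t) :
    ∫⁻ x, ‖f x‖ₑ ^ t ∂μ ≤ eLpNormEssSup f μ ^ (t - r) * ∫⁻ x, ‖f x‖ₑ ^ r ∂μ := by
  rw [← lintegral_const_mul'' _ (hf.enorm.pow_const r)]
  refine lintegral_mono_ae ?_
  filter_upwards [enorm_ae_le_eLpNormEssSup f μ] with x hx
  calc ‖f x‖ₑ ^ t = ‖f x‖ₑ ^ (t - r) * ‖f x‖ₑ ^ r := by
        rw [← ENNReal.rpow_add_of_nonneg _ _ (by linarith) hr, sub_add_cancel]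
    _ ≤ eLpNormEssSup f μ ^ (t - r) * ‖f x‖ₑ ^ r := by
      gcongr

-- At `p = ∞` the exponent `(p₀ / p).toReal` is `0`, also for `p₀ = ∞`.
lemma eLpNorm_le_eLpNorm_top_rpow_mul_eLpNorm_rpow (hf : AEStronglyMeasurable f μ)
    {p₀ p : ℝ≥0∞} (hp₀ : p₀ ≠ 0) (hp : p₀ ≤ p) :
    eLpNorm f p μ ≤ eLpNorm f ∞ μ ^ (1 - (p₀ / p).toReal) * eLpNorm f p₀ μ ^ (p₀ / p).toReal := by
  rcases eq_or_ne p ∞ with rfl | hp_top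
  · simp
  have hp₀_top : p₀ ≠ ∞ := ne_top_of_le_ne_top hp_top hp
  have hp_ne : p ≠ 0 := (hp₀.bot_lt.trans_le hp).ne'
  have hp₀_pos : 0 < p₀.toReal := ENNReal.toReal_pos hp₀ hp₀_top
  have hp_pos : 0 < p.toReal := ENNReal.toReal_pos hp_ne hp_top
  rw [eLpNorm_eq_lintegral_rpow_enorm_toReal hp_ne hp_top,
    eLpNorm_eq_lintegral_rpow_enorm_toReal hp₀ hp₀_top, eLpNorm_exponent_top]
  calc (∫⁻ x, ‖f x‖ₑ ^ p.toReal ∂μ) ^ (1 / p.toReal)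
      ≤ (eLpNormEssSup f μ ^ (p.toReal - p₀.toReal) * ∫⁻ x, ‖f x‖ₑ ^ p₀.toReal ∂μ)
          ^ (1 / p.toReal) := by
        gcongr
        exact lintegral_enorm_rpow_le_eLpNormEssSup_rpow_mul hf hp₀_pos.le
          (ENNReal.toReal_mono hp_top hp)
    _ = _ := by
      rw [ENNReal.mul_rpow_of_nonneg _ _ (by positivity), ← ENNReal.rpow_mul, ← ENNReal.rpow_mul,
        ENNReal.toReal_div]
      congr 2 <;> field_simp

end LpNorm

lemma enorm_convolution_lsmul_le {G 𝕜 E : Type*} [AddCommGroup G] [MeasurableSpace G]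
    [MeasurableAdd G] [MeasurableNeg G] {μ : Measure G} [μ.IsAddLeftInvariant] [μ.IsNegInvariant]
    [NontriviallyNormedField 𝕜] [NormedAddCommGroup E] [NormedSpace 𝕜 E] [NormedSpace ℝ E]
    {φ : G → 𝕜} {f : G → E} (hφ : AEStronglyMeasurable φ μ) (hf : AEStronglyMeasurable f μ)
    (p q : ℝ≥0∞) [p.HolderConjugate q] (x : G) :
    ‖(φ ⋆[ContinuousLinearMap.lsmul 𝕜 𝕜, μ] f) x‖ₑ ≤ eLpNorm φ p μ * eLpNorm f q μ := by
  have reflect : MeasurePreserving (x - ·) μ μ := μ.measurePreserving_sub_left x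
  calc ‖(φ ⋆[ContinuousLinearMap.lsmul 𝕜 𝕜, μ] f) x‖ₑ
      ≤ eLpNorm (φ • (f ∘ (x - ·))) 1 μ := by
        rw [eLpNorm_one_eq_lintegral_enorm]
        exact enorm_integral_le_lintegral_enorm _
    _ ≤ eLpNorm φ p μ * eLpNorm (f ∘ (x - ·)) q μ :=
        eLpNorm_smul_le_mul_eLpNorm (hf.comp_measurePreserving reflect) hφ
    _ = eLpNorm φ p μ * eLpNorm f q μ := by rw [eLpNorm_comp_measurePreserving hf reflect]

lemma eLpNorm_comp_inv_smul {V E : Type*} [NormedAddCommGroup V] [NormedSpace ℝ V]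
    [FiniteDimensional ℝ V] [MeasurableSpace V] [BorelSpace V] (μ : Measure V) [μ.IsAddHaarMeasure]
    [NormedAddCommGroup E] (f : V → E) (p : ℝ≥0∞) {R : ℝ} (hR : 0 < R) :
    eLpNorm (fun x ↦ f (R⁻¹ • x)) p μ
      = ENNReal.ofReal R ^ (Module.finrank ℝ V * p⁻¹.toReal) * eLpNorm f p μ := by
  have map_eq : μ.map (R⁻¹ • ·) = ENNReal.ofReal R ^ (Module.finrank ℝ V : ℝ) • μ := by
    rw [Measure.map_addHaar_smul μ (inv_ne_zero hR.ne'), inv_pow, inv_inv,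
      abs_of_pos (by positivity), ENNReal.ofReal_pow hR.le, ENNReal.rpow_natCast]
  have scale_ne_zero : ENNReal.ofReal R ^ (Module.finrank ℝ V : ℝ) ≠ 0 := by simp [hR]
  calc eLpNorm (fun x ↦ f (R⁻¹ • x)) p μ = eLpNorm f p (μ.map (R⁻¹ • ·)) :=
        ((measurableEmbedding_const_smul₀ (inv_ne_zero hR.ne')).eLpNorm_map_measure).symm
    _ = _ := by
      rw [map_eq, eLpNorm_smul_measure_of_ne_zero scale_ne_zero, one_div, smul_eq_mul,
        ← ENNReal.rpow_mul]

section BandLimited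

variable {V : Type*} [NormedAddCommGroup V] [InnerProductSpace ℝ V] [FiniteDimensional ℝ V]
  [MeasurableSpace V] [BorelSpace V] {F : Type*} [NormedAddCommGroup F] [NormedSpace ℂ F]

lemma fourier_comp_inv_smul (f : V → F) {R : ℝ} (hR : R ≠ 0) (ξ : V) :
    𝓕 (fun x ↦ f (R⁻¹ • x)) ξ = |R ^ Module.finrank ℝ V| • 𝓕 f (R • ξ) := by
  rw [Real.fourier_eq, Real.fourier_eq, ← Measure.integral_comp_inv_smul volume _ R]
  congr 1 with v
  rw [real_inner_smul_left, real_inner_smul_right, inv_mul_cancel_left₀ hR]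

lemma exists_schwartzMap_fourier_eq_one_on_closedBall (V : Type*) [NormedAddCommGroup V]
    [InnerProductSpace ℝ V] [FiniteDimensional ℝ V] [MeasurableSpace V] [BorelSpace V] {R : ℝ}
    (hR : 0 < R) :
    ∃ φ : 𝓢(V, ℂ), ∀ ξ ∈ Metric.closedBall (0 : V) R, 𝓕 (φ : V → ℂ) ξ = 1 := by
  let bump : ContDiffBump (0 : V) := ⟨R, R + 1, hR, lt_add_one R⟩
  have compactSupport : HasCompactSupport (fun x ↦ (bump x : ℂ)) :=
    bump.hasCompactSupport.comp_left Complex.ofReal_zero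
  let ψ : 𝓢(V, ℂ) :=
    compactSupport.toSchwartzMap (Complex.ofRealCLM.contDiff.comp bump.contDiff)
  refine ⟨𝓕⁻ ψ, fun ξ hξ ↦ ?_⟩
  rw [← SchwartzMap.fourier_coe, FourierTransform.fourier_fourierInv_eq]
  exact congrArg Complex.ofReal (bump.one_of_mem_closedBall hξ)

/-- Band-limited functions: the Fourier transform vanishes off the closed ball of radius `R`.
Integrability gives the Fourier integral its meaning, and continuity selects the representative
for which Fourier inversion holds pointwise. -/
structure IsBandLimited_s10 (f : V → F) (R : ℝ) : Prop where
  continuous : Continuous f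
  integrable : Integrable f
  support_fourier_subset : Function.support (𝓕 f) ⊆ Metric.closedBall 0 R

namespace IsBandLimited_s10

variable {f : V → F} {R : ℝ}

lemma of_schwartzMap (f : 𝓢(V, F))
    (hf : Function.support (𝓕 (f : V → F)) ⊆ Metric.closedBall 0 R) : IsBandLimited_s10 f R :=
  ⟨f.continuous, f.integrable, hf⟩

lemma comp_inv_smul (hf : IsBandLimited_s10 f R) (hR : 0 < R) :
    IsBandLimited_s10 (fun x ↦ f (R⁻¹ • x)) 1 where
  continuous := hf.continuous.comp (continuous_const_smul _)
  integrable := hf.integrable.comp_smul (inv_ne_zero hR.ne')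
  support_fourier_subset ξ hξ := by
    have hRξ : R • ξ ∈ Function.support (𝓕 f) := fun h ↦ hξ (by
      rw [fourier_comp_inv_smul f hR.ne', h, smul_zero])
    have norm_le : R * ‖ξ‖ ≤ R := by
      simpa [norm_smul, abs_of_pos hR] using hf.support_fourier_subset hRξ
    simpa using (mul_le_iff_le_one_right hR).1 norm_le

lemma integrable_fourier_s10 (hf : IsBandLimited_s10 f R) : Integrable (𝓕 f) :=
  (VectorFourier.fourierIntegral_continuous Real.continuous_fourierChar continuous_inner
    hf.integrable).integrable_of_hasCompactSupport <|
      .of_support_subset_isCompact (isCompact_closedBall 0 R) hf.support_fourier_subset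

variable [CompleteSpace F]

lemma convolution_eq (hf : IsBandLimited_s10 f R) {φ : 𝓢(V, ℂ)}
    (hφ : ∀ ξ ∈ Metric.closedBall (0 : V) R, 𝓕 (φ : V → ℂ) ξ = 1) :
    φ ⋆[ContinuousLinearMap.lsmul ℂ ℂ] f = f := by
  have bddAbove : BddAbove (Set.range fun x ↦ ‖φ x‖) :=
    ⟨_, Set.forall_mem_range.2 (φ.norm_le_seminorm ℝ)⟩
  have continuous : Continuous (φ ⋆[ContinuousLinearMap.lsmul ℂ ℂ] f) :=
    bddAbove.continuous_convolution_left_of_integrable _ φ.continuous hf.integrable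
  have integrable : Integrable (φ ⋆[ContinuousLinearMap.lsmul ℂ ℂ] f) :=
    φ.integrable.integrable_convolution _ hf.integrable
  have fourier_eq : 𝓕 (φ ⋆[ContinuousLinearMap.lsmul ℂ ℂ] f) = 𝓕 f := by
    ext ξ
    rw [Real.fourier_smul_convolution_eq φ.integrable hf.integrable]
    by_cases hξ : 𝓕 f ξ = 0
    · rw [hξ, smul_zero]
    · rw [hφ ξ (hf.support_fourier_subset hξ), one_smul]
  rw [← continuous.fourierInv_fourier_eq integrable (fourier_eq ▸ hf.integrable_fourier_s10),
    fourier_eq, hf.continuous.fourierInv_fourier_eq hf.integrable hf.integrable_fourier_s10]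

lemma eLpNorm_top_le_of_holderConjugate (hf : IsBandLimited_s10 f R) {φ : 𝓢(V, ℂ)}
    (hφ : ∀ ξ ∈ Metric.closedBall (0 : V) R, 𝓕 (φ : V → ℂ) ξ = 1) (p q : ℝ≥0∞)
    [p.HolderConjugate q] : eLpNorm f ∞ volume ≤ eLpNorm φ p volume * eLpNorm f q volume := by
  rw [eLpNorm_exponent_top]
  refine eLpNormEssSup_le_of_ae_enorm_bound (.of_forall fun x ↦ ?_)
  rw [← congrFun (hf.convolution_eq hφ) x]
  exact enorm_convolution_lsmul_le φ.continuous.aestronglyMeasurable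
    hf.integrable.aestronglyMeasurable p q x

lemma eLpNorm_top_le_of_le_one (hf : IsBandLimited_s10 f R) {φ : 𝓢(V, ℂ)}
    (hφ : ∀ ξ ∈ Metric.closedBall (0 : V) R, 𝓕 (φ : V → ℂ) ξ = 1) {p : ℝ≥0∞} (hp : p ≠ 0)
    (hp_le : p ≤ 1) :
    eLpNorm f ∞ volume ≤ eLpNorm φ ∞ volume ^ p.toReal⁻¹ * eLpNorm f p volume := by
  have top_le_one : eLpNorm f ∞ volume ≤ eLpNorm φ ∞ volume * eLpNorm f 1 volume :=
    haveI := ENNReal.HolderConjugate.top_one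
    hf.eLpNorm_top_le_of_holderConjugate hφ ∞ 1
  have top_ne_top : eLpNorm f ∞ volume ≠ ∞ := ne_top_of_le_ne_top
    (ENNReal.mul_ne_top (φ.eLpNorm_lt_top ∞ volume).ne
      (memLp_one_iff_integrable.2 hf.integrable).eLpNorm_ne_top) top_le_one
  have interpolation :=
    eLpNorm_le_eLpNorm_top_rpow_mul_eLpNorm_rpow hf.integrable.aestronglyMeasurable hp hp_le
  rw [div_one] at interpolation
  exact ennreal_le_rpow_inv_mul_of_le_mul_rpow_mul_rpow top_ne_top
    (ENNReal.toReal_pos hp (ne_top_of_le_ne_top ENNReal.one_ne_top hp_le))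
    (ENNReal.toReal_mono ENNReal.one_ne_top hp_le) (top_le_one.trans (by gcongr))

end IsBandLimited_s10

variable (V F) [CompleteSpace F]

lemma exists_eLpNorm_top_le_mul_eLpNorm {R : ℝ} (hR : 0 < R) {p : ℝ≥0∞} (hp : p ≠ 0) :
    ∃ C : ℝ≥0∞, C ≠ ∞ ∧ ∀ f : V → F, IsBandLimited_s10 f R →
      eLpNorm f ∞ volume ≤ C * eLpNorm f p volume := by
  obtain ⟨φ, hφ⟩ := exists_schwartzMap_fourier_eq_one_on_closedBall V hR
  rcases le_total 1 p with one_le | le_one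
  · have := (ENNReal.HolderConjugate.conjExponent one_le).symm
    exact ⟨eLpNorm φ p.conjExponent volume, (φ.eLpNorm_lt_top _ volume).ne,
      fun f hf ↦ hf.eLpNorm_top_le_of_holderConjugate hφ p.conjExponent p⟩
  · exact ⟨eLpNorm φ ∞ volume ^ p.toReal⁻¹,
      ENNReal.rpow_ne_top_of_nonneg (by positivity) (φ.eLpNorm_lt_top ∞ volume).ne,
      fun f hf ↦ hf.eLpNorm_top_le_of_le_one hφ hp le_one⟩

lemma exists_eLpNorm_le_mul_eLpNorm {R : ℝ} (hR : 0 < R) {p₀ p : ℝ≥0∞} (hp₀ : p₀ ≠ 0)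
    (hp : p₀ ≤ p) :
    ∃ C : ℝ≥0∞, C ≠ ∞ ∧ ∀ f : V → F, IsBandLimited_s10 f R →
      eLpNorm f p volume ≤ C * eLpNorm f p₀ volume := by
  obtain ⟨C, hC, top_le⟩ := exists_eLpNorm_top_le_mul_eLpNorm V F hR hp₀
  set θ := (p₀ / p).toReal
  have hθ : 0 ≤ θ := ENNReal.toReal_nonneg
  have hθ_le : 0 ≤ 1 - θ :=
    sub_nonneg.2 (ENNReal.toReal_mono ENNReal.one_ne_top (ENNReal.div_le_of_le_mul (by simpa)))
  refine ⟨C ^ (1 - θ), ENNReal.rpow_ne_top_of_nonneg hθ_le hC, fun f hf ↦ ?_⟩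
  calc eLpNorm f p volume
      ≤ eLpNorm f ∞ volume ^ (1 - θ) * eLpNorm f p₀ volume ^ θ :=
        eLpNorm_le_eLpNorm_top_rpow_mul_eLpNorm_rpow hf.integrable.aestronglyMeasurable hp₀ hp
    _ ≤ (C * eLpNorm f p₀ volume) ^ (1 - θ) * eLpNorm f p₀ volume ^ θ := by
        gcongr
        exact top_le f hf
    _ = C ^ (1 - θ) * eLpNorm f p₀ volume := by
        rw [ENNReal.mul_rpow_of_nonneg _ _ hθ_le, mul_assoc,
          ← ENNReal.rpow_add_of_nonneg _ _ hθ_le hθ, sub_add_cancel, ENNReal.rpow_one]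

theorem nikolskij_plancherel_polya {p₀ p : ℝ≥0∞} (hp₀ : p₀ ≠ 0) (hp : p₀ ≤ p) :
    ∃ C : ℝ≥0∞, C ≠ ∞ ∧ ∀ R : ℝ, 0 < R → ∀ f : V → F, IsBandLimited_s10 f R →
      eLpNorm f p volume ≤ C * ENNReal.ofReal R ^
        (Module.finrank ℝ V * p₀⁻¹.toReal - Module.finrank ℝ V * p⁻¹.toReal)
          * eLpNorm f p₀ volume := by
  obtain ⟨C, hC, unit_le⟩ := exists_eLpNorm_le_mul_eLpNorm V F one_pos hp₀ hp
  refine ⟨C, hC, fun R hR f hf ↦ ?_⟩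
  have hR_ne_zero : ENNReal.ofReal R ≠ 0 := by simpa using hR
  have dilated_le := unit_le _ (hf.comp_inv_smul hR)
  rw [eLpNorm_comp_inv_smul volume f p hR, eLpNorm_comp_inv_smul volume f p₀ hR] at dilated_le
  set a := Module.finrank ℝ V * p⁻¹.toReal
  set a₀ := Module.finrank ℝ V * p₀⁻¹.toReal
  have split_scale :
      ENNReal.ofReal R ^ a₀ = ENNReal.ofReal R ^ a * ENNReal.ofReal R ^ (a₀ - a) := by
    rw [← ENNReal.rpow_add _ _ hR_ne_zero ENNReal.ofReal_ne_top, add_sub_cancel]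
  refine (ENNReal.mul_le_mul_iff_right (by simp [hR]) (by simp [hR])).1 (dilated_le.trans_eq ?_)
  rw [split_scale]
  ring

variable {V F}

lemma two_rpow_mul_ofReal_mul_two_rpow_rpow {A : ℝ} (hA : 0 < A) (s s₀ t : ℝ) :
    (2 : ℝ≥0∞) ^ (s * t) * ENNReal.ofReal (A * 2 ^ t) ^ (s₀ - s)
      = ENNReal.ofReal A ^ (s₀ - s) * 2 ^ (s₀ * t) := by
  have hA_ne_zero : ENNReal.ofReal A ≠ 0 := by simpa using hA
  rw [ENNReal.ofReal_mul hA.le, ← ENNReal.ofReal_rpow_of_pos two_pos, ENNReal.ofReal_ofNat,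
    ENNReal.mul_rpow_of_ne_zero hA_ne_zero (by simp), ← ENNReal.rpow_mul, mul_left_comm,
    ← ENNReal.rpow_add _ _ (by simp) (by simp)]
  ring_nf

theorem stmt10_general (s s₀ : ℝ) {p p₀ : ℝ≥0∞} (hp₀ : p₀ ≠ 0) (hp : p₀ ≤ p)
    (hsob : s - Module.finrank ℝ V * p⁻¹.toReal = s₀ - Module.finrank ℝ V * p₀⁻¹.toReal)
    {q : ℝ} (hq : 0 < q) {A : ℝ} (hA : 0 < A) :
    ∃ C : ℝ≥0∞, 0 < C ∧ C ≠ ∞ ∧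
      ∀ f : ℕ → V → F, (∀ j : ℕ, IsBandLimited_s10 (f j) (A * 2 ^ (j : ℝ))) →
        (∑' j : ℕ, ((2 : ℝ≥0∞) ^ (s * (j : ℝ)) * eLpNorm (f j) p volume) ^ q) ^ (1 / q)
          ≤ C * (∑' j : ℕ, ((2 : ℝ≥0∞) ^ (s₀ * (j : ℝ)) * eLpNorm (f j) p₀ volume) ^ q)
            ^ (1 / q) := by
  obtain ⟨K, hK, nikolskij⟩ := nikolskij_plancherel_polya V F hp₀ hp
  rw [show Module.finrank ℝ V * p₀⁻¹.toReal - Module.finrank ℝ V * p⁻¹.toReal = s₀ - s by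
    linarith] at nikolskij
  have hA_pow : ENNReal.ofReal A ^ (s₀ - s) ≠ ∞ := by simp [hA]
  refine ⟨K * ENNReal.ofReal A ^ (s₀ - s) + 1, by simp, by finiteness, fun f hf ↦
    tsum_rpow_rpow_le_mul_tsum_rpow_rpow hq fun j ↦ ?_⟩
  calc (2 : ℝ≥0∞) ^ (s * (j : ℝ)) * eLpNorm (f j) p volume
      ≤ 2 ^ (s * (j : ℝ)) *
          (K * ENNReal.ofReal (A * 2 ^ (j : ℝ)) ^ (s₀ - s) * eLpNorm (f j) p₀ volume) := by
        gcongr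
        exact nikolskij _ (by positivity) (f j) (hf j)
    _ = K * (2 ^ (s * (j : ℝ)) * ENNReal.ofReal (A * 2 ^ (j : ℝ)) ^ (s₀ - s)) *
          eLpNorm (f j) p₀ volume := by ring
    _ = K * ENNReal.ofReal A ^ (s₀ - s) * (2 ^ (s₀ * (j : ℝ)) * eLpNorm (f j) p₀ volume) := by
        rw [two_rpow_mul_ofReal_mul_two_rpow_rpow hA]
        ring
    _ ≤ (K * ENNReal.ofReal A ^ (s₀ - s) + 1) *
          (2 ^ (s₀ * (j : ℝ)) * eLpNorm (f j) p₀ volume) := by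
        gcongr
        exact le_self_add

end BandLimited

/-- Sobolev embedding inequality for Besov quasi-norms of band-limited sequences:
if `s - n/p = s₀ - n/p₀` with `0 < p₀ ≤ p < ∞` and `supp 𝓕f_j ⊆ B(0, A·2^j)`, then
`(∑_j (2^{sj} ‖f_j‖_p)^q)^{1/q} ≤ C (∑_j (2^{s₀j} ‖f_j‖_{p₀})^q)^{1/q}`. -/
theorem stmt10 (n : ℕ) (hn : 1 ≤ n) (s s₀ p p₀ : ℝ) (hp₀ : 0 < p₀) (hpp : p₀ ≤ p)
    (hsob : s - n / p = s₀ - n / p₀) (q : ℝ) (hq : 0 < q)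
    (A : ℝ) (hA : 0 < A) :
    ∃ C : ℝ≥0∞, 0 < C ∧ C ≠ ∞ ∧
      ∀ f : ℕ → 𝓢(EuclideanSpace ℝ (Fin n), ℂ),
        (∀ j : ℕ, Function.support (𝓕 (f j : EuclideanSpace ℝ (Fin n) → ℂ))
          ⊆ Metric.closedBall 0 (A * 2 ^ (j:ℝ))) →
        (∑' j : ℕ, ((2:ℝ≥0∞) ^ (s * (j:ℝ))
            * (∫⁻ x : EuclideanSpace ℝ (Fin n), (‖f j x‖₊ : ℝ≥0∞) ^ p) ^ (1 / p)) ^ q) ^ (1 / q)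
          ≤ C * (∑' j : ℕ, ((2:ℝ≥0∞) ^ (s₀ * (j:ℝ))
            * (∫⁻ x : EuclideanSpace ℝ (Fin n), (‖f j x‖₊ : ℝ≥0∞) ^ p₀) ^ (1 / p₀)) ^ q) ^ (1 / q) := by
  have hp : 0 < p := hp₀.trans_le hpp
  obtain ⟨C, hC_pos, hC_top, besov_le⟩ := stmt10_general (V := EuclideanSpace ℝ (Fin n)) (F := ℂ)
    s s₀ (ENNReal.ofReal_pos.2 hp₀).ne' (ENNReal.ofReal_le_ofReal hpp)
    (by simpa [hp.le, hp₀.le, div_eq_mul_inv] using hsob) hq hA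
  simp only [eLpNorm_ofReal_eq_lintegral _ hp, eLpNorm_ofReal_eq_lintegral _ hp₀] at besov_le
  exact ⟨C, hC_pos, hC_top, fun f hf ↦
    besov_le (fun j ↦ f j) fun j ↦ .of_schwartzMap (f j) (hf j)⟩
end

section
/- (Triangle inequality for the anisotropic distance function.) Let n ≥ 1 and let a₁, …, a_n be real numbers with a_k ≥ 1 for every k. Let x, y ∈ ℝⁿ with x ≠ 0, y ≠ 0 and x + y ≠ 0, and let s, t, u > 0 satisfy ∑_{k=1}^n x_k²/s^{2a_k} = 1, ∑_{k=1}^n y_k²/t^{2a_k} = 1, and ∑_{k=1}^n (x_k + y_k)²/u^{2a_k} = 1. Then u ≤ s + t. -/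
/-!
Write `w = s + t`. Since `a k ≥ 1` and `s / w ≤ 1`, enlarging the scale from `s` to `w` multiplies
`|x k| / s ^ a k` by `(s / w) ^ a k ≤ s / w`. Hence `|x k + y k| / w ^ a k` is at most the average
of `|x k| / s ^ a k` and `|y k| / t ^ a k` with weights `s / w` and `t / w`, and so is its square,
by convexity. Summing, the series of `x + y` at scale `w` is at most `1`; as a series of this kind
strictly decreases in the scale, it can equal `1` at scale `u` only if `u ≤ w`.
-/

section Scale

variable {a s t w : ℝ}

lemma div_rpow_le_div_mul_div_rpow (ha : 1 ≤ a) (hs : 0 < s) (hsw : s ≤ w) {r : ℝ} (hr : 0 ≤ r) :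
    r / w ^ a ≤ s / w * (r / s ^ a) := by
  have hw : 0 < w := hs.trans_le hsw
  have hsa : s ^ a ≠ 0 := (Real.rpow_pos_of_pos hs a).ne'
  calc r / w ^ a = (s / w) ^ a * (r / s ^ a) := by
        rw [Real.div_rpow hs.le hw.le]
        field_simp
    _ ≤ s / w * (r / s ^ a) := by
        gcongr
        exact Real.rpow_le_self_of_le_one (by positivity) ((div_le_one hw).2 hsw) ha

lemma rpow_div_rpow_mul {r : ℝ} (hr : 0 ≤ r) (hs : 0 ≤ s) (p a : ℝ) :
    r ^ p / s ^ (p * a) = (r / s ^ a) ^ p := by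
  rw [Real.div_rpow hr (Real.rpow_nonneg hs a), ← Real.rpow_mul hs, mul_comm]

variable {E : Type*} [SeminormedAddGroup E]

lemma norm_add_div_rpow_add_le (ha : 1 ≤ a) (hs : 0 < s) (ht : 0 < t) (x y : E) :
    ‖x + y‖ / (s + t) ^ a ≤
      s / (s + t) * (‖x‖ / s ^ a) + t / (s + t) * (‖y‖ / t ^ a) := by
  calc ‖x + y‖ / (s + t) ^ a ≤ (‖x‖ + ‖y‖) / (s + t) ^ a := by
        gcongr
        exact norm_add_le x y
    _ = ‖x‖ / (s + t) ^ a + ‖y‖ / (s + t) ^ a := add_div _ _ _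
    _ ≤ s / (s + t) * (‖x‖ / s ^ a) + t / (s + t) * (‖y‖ / t ^ a) :=
        add_le_add
          (div_rpow_le_div_mul_div_rpow ha hs (le_add_of_nonneg_right ht.le) (norm_nonneg x))
          (div_rpow_le_div_mul_div_rpow ha ht (le_add_of_nonneg_left hs.le) (norm_nonneg y))

lemma norm_add_rpow_div_rpow_add_le {p : ℝ} (hp : 1 ≤ p) (ha : 1 ≤ a) (hs : 0 < s) (ht : 0 < t)
    (x y : E) :
    ‖x + y‖ ^ p / (s + t) ^ (p * a) ≤
      s / (s + t) * (‖x‖ ^ p / s ^ (p * a)) + t / (s + t) * (‖y‖ ^ p / t ^ (p * a)) := by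
  have hst : 0 < s + t := add_pos hs ht
  have hweights : s / (s + t) + t / (s + t) = 1 := by rw [← add_div, div_self hst.ne']
  rw [rpow_div_rpow_mul (norm_nonneg _) hst.le, rpow_div_rpow_mul (norm_nonneg _) hs.le,
    rpow_div_rpow_mul (norm_nonneg _) ht.le]
  calc (‖x + y‖ / (s + t) ^ a) ^ p
      ≤ (s / (s + t) * (‖x‖ / s ^ a) + t / (s + t) * (‖y‖ / t ^ a)) ^ p := by
        gcongr
        exact norm_add_div_rpow_add_le ha hs ht x y
    _ ≤ s / (s + t) * (‖x‖ / s ^ a) ^ p + t / (s + t) * (‖y‖ / t ^ a) ^ p :=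
        (convexOn_rpow hp).2 (Set.mem_Ici.2 (by positivity)) (Set.mem_Ici.2 (by positivity))
          (by positivity) (by positivity) hweights

end Scale

theorem stmt12_general {ι : Type*} {E : ι → Type*} [∀ k, SeminormedAddGroup (E k)]
    {p : ℝ} (hp : 1 ≤ p) {a : ι → ℝ} (ha : ∀ k, 1 ≤ a k) {x y : ∀ k, E k}
    {s t u : ℝ} (hs : 0 < s) (ht : 0 < t)
    (hxs : HasSum (fun k => ‖x k‖ ^ p / s ^ (p * a k)) 1)
    (hyt : HasSum (fun k => ‖y k‖ ^ p / t ^ (p * a k)) 1)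
    (hxyu : HasSum (fun k => ‖x k + y k‖ ^ p / u ^ (p * a k)) 1) :
    u ≤ s + t := by
  by_contra! hlt
  have hst : 0 < s + t := add_pos hs ht
  have hexp (k : ι) : 0 < p * a k := mul_pos (by linarith) (by linarith [ha k])
  have hscale (k : ι) : (s + t) ^ (p * a k) < u ^ (p * a k) :=
    Real.rpow_lt_rpow hst.le hlt (hexp k)
  have hconvex (k : ι) := norm_add_rpow_div_rpow_add_le hp (ha k) hs ht (x k) (y k)
  have haverage : HasSum (fun k => s / (s + t) * (‖x k‖ ^ p / s ^ (p * a k)) +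
      t / (s + t) * (‖y k‖ ^ p / t ^ (p * a k))) 1 := by
    have hweights : s / (s + t) * 1 + t / (s + t) * 1 = 1 := by field_simp
    simpa only [hweights] using (hxs.mul_left (s / (s + t))).add (hyt.mul_left (t / (s + t)))
  obtain ⟨j, hj⟩ : ∃ j, ‖x j + y j‖ ^ p ≠ 0 := by
    by_contra! hzero
    simp only [hzero, zero_div] at hxyu
    exact one_ne_zero (hxyu.unique hasSum_zero)
  refine lt_irrefl (1 : ℝ) (hasSum_lt (i := j) (fun k => ?_) ?_ hxyu haverage)
  · exact (div_le_div_of_nonneg_left (by positivity) (by positivity) (hscale k).le).trans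
      (hconvex k)
  · exact (div_lt_div_of_pos_left (by positivity) (by positivity) (hscale j)).trans_le (hconvex j)

lemma hasSum_norm_rpow_two_div {ι : Type*} [Fintype ι] (z d : ι → ℝ) :
    HasSum (fun k => ‖z k‖ ^ (2 : ℝ) / d k) (∑ k, z k ^ 2 / d k) := by
  simp only [Real.rpow_two, Real.norm_eq_abs, sq_abs]
  exact hasSum_fintype _

/-- Triangle inequality for the anisotropic distance function: if `s = |x|_a`, `t = |y|_a`
and `u = |x+y|_a`, then `u ≤ s + t`. -/
theorem stmt12 (n : ℕ) (hn : 1 ≤ n) (a : Fin n → ℝ) (ha : ∀ k, 1 ≤ a k)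
    (x y : Fin n → ℝ) (hx : x ≠ 0) (hy : y ≠ 0) (hxy : x + y ≠ 0)
    (s t u : ℝ) (hs : 0 < s) (ht : 0 < t) (hu : 0 < u)
    (hxs : ∑ k : Fin n, x k ^ 2 / s ^ (2 * a k) = 1)
    (hyt : ∑ k : Fin n, y k ^ 2 / t ^ (2 * a k) = 1)
    (hxyu : ∑ k : Fin n, (x k + y k) ^ 2 / u ^ (2 * a k) = 1) :
    u ≤ s + t := by
  exact stmt12_general one_le_two ha hs ht (hxs ▸ hasSum_norm_rpow_two_div x _)
    (hyt ▸ hasSum_norm_rpow_two_div y _) (hxyu ▸ hasSum_norm_rpow_two_div (x + y) _)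
end

section
/- (Comparison of the anisotropic distance with ℓ^∞- and ℓ^1-type expressions.) Let n ≥ 1 and let a₁, …, a_n be real numbers with a_k ≥ 1 for every k. Let x ∈ ℝⁿ with x ≠ 0 and let t > 0 satisfy ∑_{k=1}^n x_k²/t^{2a_k} = 1. Then max_{1≤k≤n} |x_k|^{1/a_k} ≤ t and t ≤ ∑_{k=1}^n |x_k|^{1/a_k}. -/
/-!
With `y k = |x k| ^ (1 / a k) / t`, the equation defining `t` becomes `∑ k, y k ^ (2 * a k) = 1`
and the claim becomes `y k ≤ 1 ≤ ∑ k, y k`. The first inequality holds because no term of a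
nonnegative sum exceeds the sum, the second because `y ^ p ≤ y` for `0 ≤ y ≤ 1 ≤ p`.
-/

section

variable {ι : Type*} {s : Finset ι}

theorem one_le_sum_of_one_le_sum_rpow {y p : ι → ℝ} (hy : ∀ i ∈ s, 0 ≤ y i)
    (hp : ∀ i ∈ s, 1 ≤ p i) (hsum : 1 ≤ ∑ i ∈ s, y i ^ p i) : 1 ≤ ∑ i ∈ s, y i := by
  by_contra! hlt
  have hle_one : ∀ i ∈ s, y i ≤ 1 := fun i hi ↦ (Finset.single_le_sum hy hi).trans hlt.le
  have hsum_le : ∑ i ∈ s, y i ^ p i ≤ ∑ i ∈ s, y i :=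
    Finset.sum_le_sum fun i hi ↦ Real.rpow_le_self_of_le_one (hy i hi) (hle_one i hi) (hp i hi)
  exact (hsum.trans hsum_le).not_gt hlt

theorem sq_div_rpow_two_mul {a t : ℝ} (ha : a ≠ 0) (ht : 0 ≤ t) (x : ℝ) :
    x ^ 2 / t ^ (2 * a) = (|x| ^ (1 / a) / t) ^ (2 * a) := by
  have hexp : 1 / a * (2 * a) = 2 := by field_simp
  rw [Real.div_rpow (by positivity) ht, ← Real.rpow_mul (abs_nonneg x), hexp, Real.rpow_two,
    sq_abs]

variable {a x : ι → ℝ} {t : ℝ}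

theorem abs_rpow_le_of_sum_sq_div_rpow_le_one (ht : 0 < t)
    (hsum : ∑ i ∈ s, x i ^ 2 / t ^ (2 * a i) ≤ 1) {k : ι} (hk : k ∈ s) (hak : 0 < a k) :
    |x k| ^ (1 / a k) ≤ t := by
  have hterm : x k ^ 2 / t ^ (2 * a k) ≤ 1 :=
    (Finset.single_le_sum (f := fun i ↦ x i ^ 2 / t ^ (2 * a i)) (fun i _ ↦ by positivity)
      hk).trans hsum
  rw [sq_div_rpow_two_mul hak.ne' ht.le] at hterm
  rw [← div_le_one ht]
  by_contra! hlt
  exact (Real.one_lt_rpow hlt (by positivity)).not_ge hterm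

theorem le_sum_abs_rpow_of_one_le_sum_sq_div_rpow (ha : ∀ i ∈ s, 1 / 2 ≤ a i) (ht : 0 < t)
    (hsum : 1 ≤ ∑ i ∈ s, x i ^ 2 / t ^ (2 * a i)) : t ≤ ∑ i ∈ s, |x i| ^ (1 / a i) := by
  have ha_ne : ∀ i ∈ s, a i ≠ 0 := fun i hi ↦ (one_half_pos.trans_le (ha i hi)).ne'
  rw [Finset.sum_congr rfl fun i hi ↦ sq_div_rpow_two_mul (ha_ne i hi) ht.le (x i)] at hsum
  rw [← one_le_div ht, Finset.sum_div]
  exact one_le_sum_of_one_le_sum_rpow (fun i _ ↦ by positivity)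
    (fun i hi ↦ by linarith [ha i hi]) hsum

end

theorem stmt13_general {ι : Type*} [Fintype ι] {a x : ι → ℝ} {t : ℝ} (ha : ∀ k, 1 / 2 ≤ a k)
    (ht : 0 < t) (hxt : ∑ k, x k ^ 2 / t ^ (2 * a k) = 1) :
    (∀ k, |x k| ^ (1 / a k) ≤ t) ∧ t ≤ ∑ k, |x k| ^ (1 / a k) :=
  ⟨fun k ↦ abs_rpow_le_of_sum_sq_div_rpow_le_one ht hxt.le (Finset.mem_univ k)
      (one_half_pos.trans_le (ha k)),
    le_sum_abs_rpow_of_one_le_sum_sq_div_rpow (fun k _ ↦ ha k) ht hxt.ge⟩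

/-- Comparison of the anisotropic distance with `ℓ^∞`- and `ℓ^1`-type expressions:
if `t = |x|_a` then `max_k |x k|^(1/a k) ≤ t ≤ ∑ k, |x k|^(1/a k)`. -/
theorem stmt13 (n : ℕ) (hn : 1 ≤ n) (a : Fin n → ℝ) (ha : ∀ k, 1 ≤ a k)
    (x : Fin n → ℝ) (hx : x ≠ 0) (t : ℝ) (ht : 0 < t)
    (hxt : ∑ k : Fin n, x k ^ 2 / t ^ (2 * a k) = 1) :
    (∀ k : Fin n, |x k| ^ (1 / a k) ≤ t) ∧ t ≤ ∑ k : Fin n, |x k| ^ (1 / a k) :=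
  stmt13_general (fun k ↦ one_half_lt_one.le.trans (ha k)) ht hxt
end

section
/- Let ψ : ℝ → ℂ be a Schwartz function with 𝓕ψ(ξ) = 1 for |ξ| ≤ 1 and 𝓕ψ(ξ) = 0 for |ξ| ≥ 2, and let 0 < s < 1. Then there exists a constant C > 0 such that for every R > 0, every Schwartz function u : ℝ → ℂ with supp 𝓕u ⊆ [−R, R], and every x ∈ ℝ, one has |u(x)|^s ≤ C · R^{1−s} · ∫_ℝ |u(y)|^s |Ψ(x − y)|^s dy, where Ψ(y) = R ψ(R y). -/
open scoped ENNReal NNReal FourierTransform SchwartzMap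
open MeasureTheory

/-!
A function whose frequencies lie where `𝓕 g = 1` is reproduced by convolution with `g`. Hence
`|u x| ≤ ‖v‖₁` for `v y = Ψ (x - y) u y`. As a product, `v` is band-limited too, to a ball of
radius a fixed multiple of `R`, so it is reproduced by a kernel of sup norm `K = O(R ^ d)`, which
gives `|v| ≤ K ‖v‖₁` pointwise. Integrating `|v| ≤ (K ‖v‖₁) ^ (1 - s) |v| ^ s` and cancelling
`‖v‖₁ ^ (1 - s)` leaves `‖v‖₁ ^ s ≤ K ^ (1 - s) ∫ |v| ^ s`.
-/

open Module (finrank)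
open Metric (closedBall)
open ContinuousLinearMap (lsmul)
open scoped Pointwise

theorem rpow_lintegral_le_of_le_mul_lintegral {α : Type*} [MeasurableSpace α] {μ : Measure α}
    {f : α → ℝ≥0∞} {K : ℝ≥0∞} {s : ℝ} (hs : 0 < s) (hs1 : s ≤ 1) (hK : K ≠ ∞)
    (hf : ∫⁻ a, f a ∂μ ≠ ∞) (hfK : ∀ a, f a ≤ K * ∫⁻ b, f b ∂μ) :
    (∫⁻ a, f a ∂μ) ^ s ≤ K ^ (1 - s) * ∫⁻ a, f a ^ s ∂μ := by
  set N := ∫⁻ a, f a ∂μ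
  have hs' : 0 ≤ 1 - s := sub_nonneg.2 hs1
  have rpow_split (a : ℝ≥0∞) : a = a ^ (1 - s) * a ^ s := by
    rw [← ENNReal.rpow_add_of_nonneg _ _ hs' hs.le, sub_add_cancel, ENNReal.rpow_one]
  rcases eq_or_ne N 0 with hN | hN
  · simp [hN, hs]
  have hKN : (K * N) ^ (1 - s) ≠ ∞ := ENNReal.rpow_ne_top_of_nonneg hs' (ENNReal.mul_ne_top hK hf)
  have key : N ^ (1 - s) * N ^ s ≤ N ^ (1 - s) * (K ^ (1 - s) * ∫⁻ a, f a ^ s ∂μ) :=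
    calc
      N ^ (1 - s) * N ^ s = ∫⁻ a, f a ∂μ := (rpow_split N).symm
      _ ≤ ∫⁻ a, (K * N) ^ (1 - s) * f a ^ s ∂μ := by
        refine lintegral_mono fun a ↦ ?_
        calc
          f a = f a ^ (1 - s) * f a ^ s := rpow_split _
          _ ≤ (K * N) ^ (1 - s) * f a ^ s := by gcongr; exact hfK a
      _ = N ^ (1 - s) * (K ^ (1 - s) * ∫⁻ a, f a ^ s ∂μ) := by
        rw [lintegral_const_mul' _ _ hKN, ENNReal.mul_rpow_of_nonneg _ _ hs',
          mul_left_comm, mul_assoc]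
  exact (ENNReal.mul_le_mul_iff_right (ENNReal.rpow_pos hN.bot_lt hf).ne'
    (ENNReal.rpow_ne_top_of_nonneg hs' hf)).1 key

section Transformations

variable {V : Type*} [NormedAddCommGroup V] [NormedSpace ℝ V]
  {E : Type*} [NormedAddCommGroup E] [NormedSpace ℂ E]

/-- The `L¹`-normalised dilate `y ↦ |R| ^ d • f (R • y)` of a Schwartz function on a
`d`-dimensional space. -/
noncomputable def dilate (R : ℝ) (hR : R ≠ 0) (f : 𝓢(V, E)) : 𝓢(V, E) :=
  |R| ^ finrank ℝ V • SchwartzMap.compCLMOfContinuousLinearEquiv ℂ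
    (ContinuousLinearEquiv.smulLeft (Units.mk0 R hR)) f

theorem dilate_apply {R : ℝ} (hR : R ≠ 0) (f : 𝓢(V, E)) (y : V) :
    dilate R hR f y = |R| ^ finrank ℝ V • f (R • y) :=
  rfl

theorem norm_dilate_apply_le {R : ℝ} (hR : R ≠ 0) (f : 𝓢(V, E)) (y : V) :
    ‖dilate R hR f y‖ ≤ |R| ^ finrank ℝ V * SchwartzMap.seminorm ℝ 0 0 f := by
  rw [dilate_apply, norm_smul, Real.norm_of_nonneg (by positivity)]
  gcongr
  exact SchwartzMap.norm_le_seminorm ℝ f _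

/-- The reflected translate `y ↦ f (x - y)` of a Schwartz function. -/
noncomputable def reflectTranslate (x : V) (f : 𝓢(V, E)) : 𝓢(V, E) :=
  SchwartzMap.compCLMOfAntilipschitz ℂ (g := fun y ↦ x - y) (by fun_prop)
    (IsometryEquiv.subLeft x).isometry.antilipschitz f

theorem reflectTranslate_apply (x : V) (f : 𝓢(V, E)) (y : V) : reflectTranslate x f y = f (x - y) :=
  rfl

end Transformations

variable {V : Type*} [NormedAddCommGroup V] [InnerProductSpace ℝ V] [FiniteDimensional ℝ V]
  [MeasurableSpace V] [BorelSpace V]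
  {E : Type*} [NormedAddCommGroup E] [NormedSpace ℂ E]

/-- The set of frequencies present in `f`: the points where `𝓕 f` does not vanish, without taking
the closure. -/
def frequencies (f : 𝓢(V, E)) : Set V :=
  Function.support (𝓕 f : 𝓢(V, E))

theorem mem_frequencies {f : 𝓢(V, E)} {ξ : V} : ξ ∈ frequencies f ↔ 𝓕 f ξ ≠ 0 :=
  Iff.rfl

theorem fourier_dilate {R : ℝ} (hR : R ≠ 0) (f : 𝓢(V, E)) (ξ : V) :
    𝓕 (dilate R hR f) ξ = 𝓕 f (R⁻¹ • ξ) := by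
  have change_of_variables := Measure.integral_comp_smul volume
    (fun y ↦ Real.fourierChar (-inner ℝ y (R⁻¹ • ξ)) • f y) R
  have integrand_eq (y : V) : Real.fourierChar (-inner ℝ y ξ) • dilate R hR f y =
      |R| ^ finrank ℝ V • Real.fourierChar (-inner ℝ (R • y) (R⁻¹ • ξ)) • f (R • y) := by
    rw [dilate_apply, smul_comm, real_inner_smul_left, real_inner_smul_right,
      mul_inv_cancel_left₀ hR]
  rw [SchwartzMap.fourier_coe, SchwartzMap.fourier_coe, Real.fourier_eq, Real.fourier_eq]
  simp_rw [integrand_eq]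
  rw [integral_smul, change_of_variables, smul_smul, abs_inv, abs_pow,
    mul_inv_cancel₀ (by positivity), one_smul]

theorem fourier_dilate_eq_one {ψ : 𝓢(V, ℂ)} {R : ℝ} (hψ : ∀ ξ ∈ closedBall 0 1, 𝓕 ψ ξ = 1)
    (hR : 0 < R) {ξ : V} (hξ : ξ ∈ closedBall 0 R) : 𝓕 (dilate R hR.ne' ψ) ξ = 1 := by
  rw [fourier_dilate]
  apply hψ
  rw [mem_closedBall_zero_iff] at hξ ⊢
  rwa [norm_smul, norm_inv, Real.norm_of_nonneg hR.le, inv_mul_le_one₀ hR]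

theorem frequencies_dilate_subset {f : 𝓢(V, E)} {r R : ℝ}
    (hf : frequencies f ⊆ closedBall 0 r) (hR : 0 < R) :
    frequencies (dilate R hR.ne' f) ⊆ closedBall 0 (r * R) := by
  intro ξ hξ
  rw [mem_frequencies, fourier_dilate] at hξ
  have norm_le := hf hξ
  rw [mem_closedBall_zero_iff] at norm_le ⊢
  rwa [norm_smul, norm_inv, Real.norm_of_nonneg hR.le, inv_mul_le_iff₀ hR,
    mul_comm] at norm_le

theorem fourier_reflectTranslate (x : V) (f : 𝓢(V, E)) (ξ : V) :
    𝓕 (reflectTranslate x f) ξ = Real.fourierChar (-inner ℝ x ξ) • 𝓕 f (-ξ) := by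
  rw [SchwartzMap.fourier_coe, SchwartzMap.fourier_coe, Real.fourier_eq, Real.fourier_eq,
    Circle.smul_def, ← integral_smul, ← integral_sub_left_eq_self _ volume x]
  congr 1 with y
  rw [reflectTranslate_apply, sub_sub_cancel, ← Circle.smul_def, smul_smul,
    ← AddChar.map_add_eq_mul]
  congr 2
  rw [inner_sub_left, inner_neg_right]
  ring

theorem frequencies_reflectTranslate_subset {f : 𝓢(V, E)} {r : ℝ}
    (hf : frequencies f ⊆ closedBall 0 r) (x : V) :
    frequencies (reflectTranslate x f) ⊆ closedBall 0 r := by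
  intro ξ hξ
  rw [mem_frequencies, fourier_reflectTranslate] at hξ
  simpa using hf (right_ne_zero_of_smul hξ)

section Convolution

variable {E₁ E₂ : Type*} [NormedAddCommGroup E₁] [NormedSpace ℂ E₁] [CompleteSpace E₁]
  [NormedAddCommGroup E₂] [NormedSpace ℂ E₂] [CompleteSpace E₂] [CompleteSpace E]

theorem fourier_fourier_apply (f : 𝓢(V, E)) (x : V) : 𝓕 (𝓕 f) x = f (-x) := by
  rw [SchwartzMap.fourier_coe (𝓕 f), ← neg_neg x, ← Real.fourierInv_eq_fourier_neg,
    ← SchwartzMap.fourierInv_coe, FourierTransform.fourierInv_fourier_eq, neg_neg]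

theorem fourier_pairing (B : E₁ →L[ℂ] E₂ →L[ℂ] E) (f : 𝓢(V, E₁)) (g : 𝓢(V, E₂)) :
    𝓕 (SchwartzMap.pairing B f g) = SchwartzMap.convolution B (𝓕 f) (𝓕 g) := by
  apply (FourierTransform.fourierCLE ℂ 𝓢(V, E)).injective
  ext x
  simp only [FourierTransform.fourierCLE_apply, SchwartzMap.fourier_convolution,
    SchwartzMap.pairing_apply_apply, fourier_fourier_apply]

theorem frequencies_pairing_subset (B : E₁ →L[ℂ] E₂ →L[ℂ] E) (f : 𝓢(V, E₁)) (g : 𝓢(V, E₂)) :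
    frequencies (SchwartzMap.pairing B f g) ⊆ frequencies f + frequencies g := by
  rw [frequencies, fourier_pairing, funext (SchwartzMap.convolution_apply B (𝓕 f) (𝓕 g))]
  exact support_convolution_subset B

theorem integral_smul_eq_self_of_fourier_eq_one {g : 𝓢(V, ℂ)} {f : 𝓢(V, E)}
    (h : ∀ ξ ∈ frequencies f, 𝓕 g ξ = 1) (x : V) :
    ∫ y, g (x - y) • f y = f x := by
  have fourier_eq : 𝓕 (SchwartzMap.convolution (lsmul ℂ ℂ) g f) = 𝓕 f := by
    ext ξ
    rw [SchwartzMap.fourier_convolution, SchwartzMap.pairing_apply_apply,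
      ContinuousLinearMap.lsmul_apply]
    by_cases hξ : 𝓕 f ξ = 0
    · rw [hξ, smul_zero]
    · rw [h ξ hξ, one_smul]
  rw [← convolution_lsmul_swap, ← SchwartzMap.convolution_apply,
    (FourierTransform.fourierCLE ℂ 𝓢(V, E)).injective fourier_eq]

end Convolution

section BandLimited

variable [CompleteSpace E]

theorem enorm_le_lintegral_of_fourier_eq_one {g : 𝓢(V, ℂ)} {f : 𝓢(V, E)}
    (h : ∀ ξ ∈ frequencies f, 𝓕 g ξ = 1) (x : V) :
    ‖f x‖ₑ ≤ ∫⁻ y, ‖g (x - y) • f y‖ₑ := by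
  rw [← integral_smul_eq_self_of_fourier_eq_one h x]
  exact enorm_integral_le_lintegral_enorm _

theorem rpow_lintegral_enorm_le_of_fourier_eq_one {g : 𝓢(V, ℂ)} {f : 𝓢(V, E)}
    (h : ∀ ξ ∈ frequencies f, 𝓕 g ξ = 1) {K : ℝ} (hK : ∀ y, ‖g y‖ ≤ K)
    {s : ℝ} (hs : 0 < s) (hs1 : s ≤ 1) :
    (∫⁻ y, ‖f y‖ₑ) ^ s ≤ ENNReal.ofReal K ^ (1 - s) * ∫⁻ y, ‖f y‖ₑ ^ s := by
  refine rpow_lintegral_le_of_le_mul_lintegral hs hs1 ENNReal.ofReal_ne_top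
    f.integrable.hasFiniteIntegral.ne fun x ↦ ?_
  calc
    ‖f x‖ₑ ≤ ∫⁻ y, ‖g (x - y) • f y‖ₑ := enorm_le_lintegral_of_fourier_eq_one h x
    _ ≤ ∫⁻ y, ENNReal.ofReal K * ‖f y‖ₑ := by
      refine lintegral_mono fun y ↦ ?_
      rw [enorm_smul, ← ofReal_norm]
      gcongr
      exact hK _
    _ = ENNReal.ofReal K * ∫⁻ y, ‖f y‖ₑ := lintegral_const_mul' _ _ ENNReal.ofReal_ne_top

variable {ψ : 𝓢(V, ℂ)}

theorem rpow_lintegral_enorm_le_of_frequencies_subset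
    (hψ : ∀ ξ ∈ closedBall 0 1, 𝓕 ψ ξ = 1) {f : 𝓢(V, E)} {R : ℝ} (hR : 0 < R)
    (hf : frequencies f ⊆ closedBall 0 R) {s : ℝ} (hs : 0 < s) (hs1 : s ≤ 1) :
    (∫⁻ y, ‖f y‖ₑ) ^ s ≤
      ENNReal.ofReal (R ^ finrank ℝ V * SchwartzMap.seminorm ℝ 0 0 ψ) ^ (1 - s) *
        ∫⁻ y, ‖f y‖ₑ ^ s := by
  refine rpow_lintegral_enorm_le_of_fourier_eq_one
    (fun ξ hξ ↦ fourier_dilate_eq_one hψ hR (hf hξ)) (fun y ↦ ?_) hs hs1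
  simpa only [abs_of_pos hR] using norm_dilate_apply_le hR.ne' ψ y

theorem frequencies_pairing_reflectTranslate_dilate_subset {r R : ℝ} (hr : 0 ≤ r)
    (hψ : frequencies ψ ⊆ closedBall 0 r) (hR : 0 < R) {u : 𝓢(V, E)}
    (hu : frequencies u ⊆ closedBall 0 R) (x : V) :
    frequencies (SchwartzMap.pairing (lsmul ℂ ℂ)
      (reflectTranslate x (dilate R hR.ne' ψ)) u) ⊆ closedBall 0 ((r + 1) * R) :=
  calc
    _ ⊆ frequencies (reflectTranslate x (dilate R hR.ne' ψ)) +
        frequencies u := frequencies_pairing_subset _ _ _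
    _ ⊆ closedBall 0 (r * R) + closedBall 0 R := Set.add_subset_add
        (frequencies_reflectTranslate_subset (frequencies_dilate_subset hψ hR) x) hu
    _ = closedBall 0 ((r + 1) * R) := by
      rw [closedBall_add_closedBall (by positivity) hR.le, add_zero, add_one_mul]

theorem rpow_enorm_apply_le_of_frequencies_subset
    (hψ1 : ∀ ξ ∈ closedBall 0 1, 𝓕 ψ ξ = 1) {r : ℝ} (hr : 0 ≤ r)
    (hψ : frequencies ψ ⊆ closedBall 0 r) {R : ℝ} (hR : 0 < R) {u : 𝓢(V, E)}
    (hu : frequencies u ⊆ closedBall 0 R) {s : ℝ} (hs : 0 < s) (hs1 : s ≤ 1) (x : V) :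
    ‖u x‖ₑ ^ s ≤
      ENNReal.ofReal (((r + 1) * R) ^ finrank ℝ V * SchwartzMap.seminorm ℝ 0 0 ψ) ^ (1 - s) *
        ∫⁻ y, ‖u y‖ₑ ^ s * ‖(R : ℂ) ^ finrank ℝ V * ψ (R • (x - y))‖ₑ ^ s := by
  set v := SchwartzMap.pairing (lsmul ℂ ℂ) (reflectTranslate x (dilate R hR.ne' ψ)) u
  have v_apply (y : V) : v y = dilate R hR.ne' ψ (x - y) • u y :=
    SchwartzMap.pairing_apply_apply ..
  have rpow_enorm_v (y : V) : ‖v y‖ₑ ^ s =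
      ‖u y‖ₑ ^ s * ‖(R : ℂ) ^ finrank ℝ V * ψ (R • (x - y))‖ₑ ^ s := by
    rw [v_apply, enorm_smul, ENNReal.mul_rpow_of_nonneg _ _ hs.le, mul_comm, dilate_apply,
      abs_of_pos hR, Complex.real_smul, Complex.ofReal_pow]
  calc
    ‖u x‖ₑ ^ s ≤ (∫⁻ y, ‖v y‖ₑ) ^ s := by
      simp_rw [v_apply]
      gcongr
      exact enorm_le_lintegral_of_fourier_eq_one
        (fun ξ hξ ↦ fourier_dilate_eq_one hψ1 hR (hu hξ)) x
    _ ≤ ENNReal.ofReal (((r + 1) * R) ^ finrank ℝ V * SchwartzMap.seminorm ℝ 0 0 ψ) ^ (1 - s) *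
        ∫⁻ y, ‖v y‖ₑ ^ s :=
      rpow_lintegral_enorm_le_of_frequencies_subset hψ1 (by positivity)
        (frequencies_pairing_reflectTranslate_dilate_subset hr hψ hR hu x) hs hs1
    _ = _ := by simp_rw [rpow_enorm_v]

theorem stmt16_general (ψ : 𝓢(V, ℂ)) (hψ1 : ∀ ξ ∈ closedBall 0 1, 𝓕 (ψ : V → ℂ) ξ = 1)
    (hψ : HasCompactSupport (𝓕 (ψ : V → ℂ))) (s : ℝ) (hs : 0 < s) (hs1 : s ≤ 1) :
    ∃ C : ℝ≥0∞, 0 < C ∧ C ≠ ∞ ∧ ∀ R : ℝ, 0 < R →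
      ∀ u : 𝓢(V, E), Function.support (𝓕 (u : V → E)) ⊆ closedBall 0 R → ∀ x : V,
        ‖u x‖ₑ ^ s ≤ C * ENNReal.ofReal (R ^ (finrank ℝ V * (1 - s))) *
          ∫⁻ y, ‖u y‖ₑ ^ s * ‖(R : ℂ) ^ finrank ℝ V * ψ (R • (x - y))‖ₑ ^ s := by
  have hs' : 0 ≤ 1 - s := sub_nonneg.2 hs1
  obtain ⟨r, hr, hψr⟩ := hψ.isCompact.isBounded.subset_closedBall_lt 0 0
  set A := ENNReal.ofReal ((r + 1) ^ finrank ℝ V * SchwartzMap.seminorm ℝ 0 0 ψ) ^ (1 - s)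
  have hA : A ≠ ∞ := ENNReal.rpow_ne_top_of_nonneg hs' ENNReal.ofReal_ne_top
  refine ⟨A + 1, by positivity, ENNReal.add_ne_top.2 ⟨hA, ENNReal.one_ne_top⟩,
    fun R hR u hu x ↦ ?_⟩
  have scaling : ENNReal.ofReal (((r + 1) * R) ^ finrank ℝ V *
      SchwartzMap.seminorm ℝ 0 0 ψ) ^ (1 - s) =
        A * ENNReal.ofReal (R ^ (finrank ℝ V * (1 - s))) := by
    rw [mul_pow, mul_right_comm, ENNReal.ofReal_mul (by positivity),
      ENNReal.mul_rpow_of_nonneg _ _ hs', ENNReal.ofReal_rpow_of_pos (pow_pos hR _),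
      Real.rpow_mul hR.le, Real.rpow_natCast]
  refine (rpow_enorm_apply_le_of_frequencies_subset hψ1 hr.le
    ((subset_tsupport _).trans hψr) hR hu hs hs1 x).trans ?_
  rw [scaling]
  gcongr
  exact le_self_add

end BandLimited

/-- Pointwise estimate for exponents below 1 in one dimension: if `𝓕ψ = 1` on `[-1,1]` and
`𝓕ψ = 0` outside `(-2,2)`, and `0 < s < 1`, then there is `C > 0` such that every Schwartz
function `u` with `supp 𝓕u ⊆ [-R, R]` satisfies
`|u(x)|^s ≤ C R^{1-s} ∫ |u(y)|^s |Ψ(x-y)|^s dy` with `Ψ(y) = R ψ(R y)`. -/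
theorem stmt16 (ψ : 𝓢(ℝ, ℂ))
    (hψ1 : ∀ ξ : ℝ, |ξ| ≤ 1 → 𝓕 (ψ : ℝ → ℂ) ξ = 1)
    (hψ0 : ∀ ξ : ℝ, 2 ≤ |ξ| → 𝓕 (ψ : ℝ → ℂ) ξ = 0)
    (s : ℝ) (hs : 0 < s) (hs1 : s < 1) :
    ∃ C : ℝ≥0∞, 0 < C ∧ C ≠ ∞ ∧ ∀ (R : ℝ), 0 < R →
      ∀ u : 𝓢(ℝ, ℂ), Function.support (𝓕 (u : ℝ → ℂ)) ⊆ Set.Icc (-R) R →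
        ∀ x : ℝ,
          (‖u x‖₊ : ℝ≥0∞) ^ s
            ≤ C * ENNReal.ofReal (R ^ (1 - s))
                * ∫⁻ y : ℝ, (‖u y‖₊ : ℝ≥0∞) ^ s * (‖(R : ℂ) * ψ (R * (x - y))‖₊ : ℝ≥0∞) ^ s := by
  have hψ1' : ∀ ξ ∈ closedBall 0 1, 𝓕 (ψ : ℝ → ℂ) ξ = 1 := fun ξ hξ ↦
    hψ1 ξ (mem_closedBall_zero_iff.1 hξ)
  have hψ0' : HasCompactSupport (𝓕 (ψ : ℝ → ℂ)) := .intro (isCompact_closedBall 0 2) fun ξ hξ ↦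
    hψ0 ξ (not_le.1 (mt mem_closedBall_zero_iff.2 hξ)).le
  simpa [Real.closedBall_eq_Icc, enorm_eq_nnnorm] using
    stmt16_general (E := ℂ) ψ hψ1' hψ0' s hs hs1.le
end

section
/- (Anisotropic Sobolev embedding inequality for Lizorkin–Triebel quasi-norms of band-limited sequences, unmixed integrability.) Let n ≥ 1, let a₁, …, a_n be real numbers with a_k ≥ 1 for every k, let s, t ∈ ℝ with s > t and 0 < p < r < ∞ satisfy s − (a₁ + ⋯ + a_n)/p = t − (a₁ + ⋯ + a_n)/r, let 0 < q < ∞ and A > 0. Then there exists a constant c > 0 such that for every sequence (f_j)_{j∈ℕ} of Schwartz functions on ℝⁿ with supp 𝓕f_j ⊆ [−A·2^{j a₁}, A·2^{j a₁}] × ⋯ × [−A·2^{j a_n}, A·2^{j a_n}] for all j, one has ‖(∑_{j=0}^∞ 2^{t j q} |f_j(·)|^q)^{1/q}‖_r ≤ c · ‖sup_{j∈ℕ} 2^{s j} |f_j(·)|‖_p, where both sides may be infinite. -/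
open scoped ENNReal NNReal FourierTransform SchwartzMap
open MeasureTheory

/-!
Write `D = a₁ + ⋯ + aₙ` and `M = ‖sup_j 2^{sj}|f_j|‖_p`. A function whose Fourier transform lives
in a fixed bounded set is reproduced by convolution with a Schwartz function, so its sup-norm is
controlled by its `L^p` quasi-norm; after an anisotropic dilation this reads
`|f_j(x)| ≤ C 2^{jD/p} ‖f_j‖_p ≤ C 2^{-j(s - D/p)} M`. Thus at each point `x` the sequence
`|f_j(x)|` is bounded by `C 2^{-j(s - D/p)} M` as well as by `2^{-js} sup_i 2^{si}|f_i(x)|`. Using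
the better of the two for each `j` leaves a two-sided geometric series, and with `θ = p/r`, for
which `t = θ s + (1 - θ)(s - D/p)`, this gives
`(∑_j 2^{tjq}|f_j(x)|^q)^{1/q} ≤ c M^{1-θ} (sup_j 2^{sj}|f_j(x)|)^θ`. Now take `L^r` quasi-norms.
-/

/-- The weighted supremum `sup_j 2^{sj} v_j`, i.e. the quasi-norm of the sequence space `ℓ^s_∞`;
with values in `[0, ∞]` so that it is defined for every sequence. -/
noncomputable def dyadicSupNorm (s : ℝ) (v : ℕ → ℝ≥0∞) : ℝ≥0∞ :=
  ⨆ j : ℕ, 2 ^ (s * j) * v j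

/-- The weighted quasi-norm `(∑_j 2^{tjq} v_j^q)^{1/q}` of the sequence space `ℓ^t_q`, for finite
`q`; with values in `[0, ∞]` so that it is defined for every sequence. -/
noncomputable def dyadicLqNorm (t q : ℝ) (v : ℕ → ℝ≥0∞) : ℝ≥0∞ :=
  (∑' j : ℕ, (2 ^ (t * j) * v j) ^ q) ^ (1 / q)

/-- The two-sided geometric series with ratios `2^{-α}` and `2^{-β}`; it bounds the sums over `ℤ`
of sequences that decay at these rates on the two sides of a peak. The term `k = 0` is counted on
both sides, because the peak need not lie at an integer. -/
noncomputable def twoSidedGeometricSum (α β : ℝ) : ℝ≥0∞ :=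
  (∑' k : ℕ, 2 ^ (-(α * k))) + ∑' k : ℕ, 2 ^ (-(β * k))

section GeometricSum

variable {α β : ℝ}

theorem two_rpow_add (x y : ℝ) : (2 : ℝ≥0∞) ^ (x + y) = 2 ^ x * 2 ^ y :=
  ENNReal.rpow_add x y two_ne_zero ENNReal.ofNat_ne_top

theorem tsum_two_rpow_neg_mul_ne_top (hα : 0 < α) :
    ∑' k : ℕ, (2 : ℝ≥0∞) ^ (-(α * k)) ≠ ∞ := by
  have ratio_lt_one : (2 : ℝ≥0∞) ^ (-α) < 1 :=
    ENNReal.rpow_lt_one_of_one_lt_of_neg (by norm_num) (neg_neg_of_pos hα)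
  simp_rw [← neg_mul, ENNReal.rpow_mul_natCast, ENNReal.tsum_geometric]
  exact ENNReal.inv_ne_top.2 (tsub_pos_of_lt ratio_lt_one).ne'

theorem twoSidedGeometricSum_ne_top (hα : 0 < α) (hβ : 0 < β) :
    twoSidedGeometricSum α β ≠ ∞ :=
  ENNReal.add_ne_top.2 ⟨tsum_two_rpow_neg_mul_ne_top hα, tsum_two_rpow_neg_mul_ne_top hβ⟩

theorem twoSidedGeometricSum_pos (α β : ℝ) : 0 < twoSidedGeometricSum α β := by
  have one_le : (1 : ℝ≥0∞) ≤ ∑' k : ℕ, 2 ^ (-(α * k)) := by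
    simpa using ENNReal.le_tsum (f := fun k : ℕ => (2 : ℝ≥0∞) ^ (-(α * k))) 0
  exact (zero_lt_one.trans_le one_le).trans_le le_self_add

theorem tsum_int_two_rpow_min_le (hα : 0 ≤ α) (hβ : 0 ≤ β) (x : ℝ) :
    ∑' j : ℤ, (2 : ℝ≥0∞) ^ min (-(α * (j - x))) (β * (j - x)) ≤ twoSidedGeometricSum α β := by
  have ceil_ge : x ≤ ⌈x⌉ := Int.le_ceil x
  have ceil_lt : ⌈x⌉ < x + 1 := Int.ceil_lt_add_one x
  rw [← (Equiv.addRight ⌈x⌉).tsum_eq,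
    tsum_of_nat_of_neg_add_one ENNReal.summable ENNReal.summable]
  refine add_le_add (ENNReal.tsum_le_tsum fun k => ?_) (ENNReal.tsum_le_tsum fun k => ?_) <;>
    refine ENNReal.rpow_le_rpow_of_exponent_le one_le_two ?_ <;>
    simp only [Equiv.coe_addRight] <;> push_cast
  · exact (min_le_left _ _).trans (by nlinarith)
  · exact (min_le_right _ _).trans (by nlinarith)

end GeometricSum

section Interpolation

variable {s σ θ q : ℝ} {v : ℕ → ℝ≥0∞}

theorem two_rpow_mul_le_dyadicSupNorm (s : ℝ) (v : ℕ → ℝ≥0∞) (j : ℕ) :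
    2 ^ (s * j) * v j ≤ dyadicSupNorm s v :=
  le_iSup (fun j : ℕ => 2 ^ (s * j) * v j) j

theorem eq_zero_of_dyadicSupNorm_eq_zero (h : dyadicSupNorm s v = 0) : v = 0 := by
  funext j
  have weighted_eq_zero := le_zero_iff.1 (h ▸ two_rpow_mul_le_dyadicSupNorm s v j)
  exact (mul_eq_zero.1 weighted_eq_zero).resolve_left (by simp)

theorem dyadicLqNorm_zero (t : ℝ) (hq : 0 < q) : dyadicLqNorm t q 0 = 0 := by
  simp [dyadicLqNorm, hq]

theorem exists_eq_two_rpow {a : ℝ≥0∞} (h0 : a ≠ 0) (htop : a ≠ ∞) :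
    ∃ x : ℝ, a = 2 ^ x := by
  refine ⟨Real.logb 2 a.toReal, ?_⟩
  rw [← ENNReal.ofReal_ofNat, ENNReal.ofReal_rpow_of_pos two_pos,
    Real.rpow_logb two_pos (by norm_num) (ENNReal.toReal_pos h0 htop), ENNReal.ofReal_toReal htop]

theorem two_rpow_mul_le_two_rpow {x y g : ℝ} {w : ℝ≥0∞} (h : 2 ^ y * w ≤ 2 ^ g) :
    2 ^ x * w ≤ 2 ^ (x - y + g) :=
  calc 2 ^ x * w = 2 ^ (x - y) * (2 ^ y * w) := by
        rw [← mul_assoc, ← two_rpow_add, sub_add_cancel]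
    _ ≤ 2 ^ (x - y) * 2 ^ g := by gcongr
    _ = 2 ^ (x - y + g) := (two_rpow_add _ _).symm

/-- The two bounds on `v j` provided by the suprema `2 ^ g` and `2 ^ m` cross over at
`j = (g - m) / (s - σ)`, which is where the right-hand side peaks. -/
theorem weighted_rpow_le_of_two_rpow_bounds (hq : 0 ≤ q) (hσs : σ < s) {g m : ℝ}
    (hg : dyadicSupNorm s v = 2 ^ g) (hm : dyadicSupNorm σ v = 2 ^ m) (j : ℕ) :
    (2 ^ ((θ * s + (1 - θ) * σ) * j) * v j) ^ q ≤
      (2 ^ (θ * g + (1 - θ) * m)) ^ q *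
        2 ^ min (-((1 - θ) * (s - σ) * q * (j - (g - m) / (s - σ))))
          (θ * (s - σ) * q * (j - (g - m) / (s - σ))) := by
  have gap_ne_zero : s - σ ≠ 0 := (sub_pos.2 hσs).ne'
  have bound_s := two_rpow_mul_le_two_rpow (x := (θ * s + (1 - θ) * σ) * j)
    ((two_rpow_mul_le_dyadicSupNorm s v j).trans_eq hg)
  have bound_σ := two_rpow_mul_le_two_rpow (x := (θ * s + (1 - θ) * σ) * j)
    ((two_rpow_mul_le_dyadicSupNorm σ v j).trans_eq hm)
  rw [← ENNReal.rpow_mul, ← two_rpow_add]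
  refine min_rec' (p := fun e => _ ≤ (2 : ℝ≥0∞) ^ (_ + e)) ?_ ?_
  · refine (ENNReal.rpow_le_rpow bound_s hq).trans_eq ?_
    rw [← ENNReal.rpow_mul]
    congr 1
    field_simp
    ring
  · refine (ENNReal.rpow_le_rpow bound_σ hq).trans_eq ?_
    rw [← ENNReal.rpow_mul]
    congr 1
    field_simp
    ring

theorem tsum_weighted_rpow_le_of_two_rpow_bounds (hq : 0 ≤ q) (hθ : 0 ≤ θ) (hθ' : θ ≤ 1)
    (hσs : σ < s) {g m : ℝ} (hg : dyadicSupNorm s v = 2 ^ g) (hm : dyadicSupNorm σ v = 2 ^ m) :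
    ∑' j : ℕ, (2 ^ ((θ * s + (1 - θ) * σ) * j) * v j) ^ q ≤
      twoSidedGeometricSum ((1 - θ) * (s - σ) * q) (θ * (s - σ) * q) *
        (2 ^ (θ * g + (1 - θ) * m)) ^ q := by
  have gap_nonneg : 0 ≤ s - σ := (sub_pos.2 hσs).le
  have one_sub_nonneg : 0 ≤ 1 - θ := sub_nonneg.2 hθ'
  refine (ENNReal.tsum_le_tsum
    (weighted_rpow_le_of_two_rpow_bounds (θ := θ) hq hσs hg hm)).trans ?_
  rw [ENNReal.tsum_mul_left, mul_comm]
  gcongr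
  refine le_trans ?_ (tsum_int_two_rpow_min_le
    (mul_nonneg (mul_nonneg one_sub_nonneg gap_nonneg) hq)
    (mul_nonneg (mul_nonneg hθ gap_nonneg) hq) ((g - m) / (s - σ)))
  exact ENNReal.tsum_comp_le_tsum_of_injective Nat.cast_injective
    (fun j : ℤ => (2 : ℝ≥0∞) ^ min (-((1 - θ) * (s - σ) * q * (j - (g - m) / (s - σ))))
          (θ * (s - σ) * q * (j - (g - m) / (s - σ))))

theorem dyadicLqNorm_le_interpolate (hq : 0 < q) (hθ : 0 < θ) (hθ' : θ < 1) (hσs : σ < s)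
    (v : ℕ → ℝ≥0∞) :
    dyadicLqNorm (θ * s + (1 - θ) * σ) q v ≤
      twoSidedGeometricSum ((1 - θ) * (s - σ) * q) (θ * (s - σ) * q) ^ (1 / q) *
        (dyadicSupNorm s v ^ θ * dyadicSupNorm σ v ^ (1 - θ)) := by
  have one_sub_pos : 0 < 1 - θ := sub_pos.2 hθ'
  set K := twoSidedGeometricSum ((1 - θ) * (s - σ) * q) (θ * (s - σ) * q)
  have const_ne_zero : K ^ (1 / q) ≠ 0 := by
    simp [ENNReal.rpow_eq_zero_iff, (twoSidedGeometricSum_pos _ _).ne', hq.le, K]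
  rcases eq_or_ne v 0 with rfl | hv
  · simp [dyadicLqNorm_zero _ hq]
  have sup_s_ne_zero : dyadicSupNorm s v ≠ 0 := mt eq_zero_of_dyadicSupNorm_eq_zero hv
  have sup_σ_ne_zero : dyadicSupNorm σ v ≠ 0 := mt eq_zero_of_dyadicSupNorm_eq_zero hv
  have rpow_s_ne_zero : dyadicSupNorm s v ^ θ ≠ 0 := by simp [sup_s_ne_zero, hθ.not_gt]
  have rpow_σ_ne_zero : dyadicSupNorm σ v ^ (1 - θ) ≠ 0 := by
    simp [sup_σ_ne_zero, one_sub_pos.not_gt]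
  rcases eq_or_ne (dyadicSupNorm s v) ∞ with sup_s_eq_top | sup_s_ne_top
  · rw [sup_s_eq_top, ENNReal.top_rpow_of_pos hθ, ENNReal.top_mul rpow_σ_ne_zero,
      ENNReal.mul_top const_ne_zero]
    exact le_top
  rcases eq_or_ne (dyadicSupNorm σ v) ∞ with sup_σ_eq_top | sup_σ_ne_top
  · rw [sup_σ_eq_top, ENNReal.top_rpow_of_pos one_sub_pos, ENNReal.mul_top rpow_s_ne_zero,
      ENNReal.mul_top const_ne_zero]
    exact le_top
  obtain ⟨g, hg⟩ := exists_eq_two_rpow sup_s_ne_zero sup_s_ne_top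
  obtain ⟨m, hm⟩ := exists_eq_two_rpow sup_σ_ne_zero sup_σ_ne_top
  rw [hg, hm, ← ENNReal.rpow_mul, ← ENNReal.rpow_mul, ← two_rpow_add, mul_comm g, mul_comm m,
    dyadicLqNorm, one_div, ENNReal.rpow_inv_le_iff hq, ENNReal.mul_rpow_of_nonneg _ _ hq.le,
    ← ENNReal.rpow_mul, inv_mul_cancel₀ hq.ne', ENNReal.rpow_one]
  exact tsum_weighted_rpow_le_of_two_rpow_bounds hq.le hθ.le hθ'.le hσs hg hm

end Interpolation

section Embedding

variable {X E : Type*} [MeasurableSpace X] [ENorm E] {μ : Measure X} {D s σ t p q r : ℝ}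
  {C : ℝ≥0∞}

theorem eLpNorm'_le_of_ae_le_mul_rpow {S G : X → ℝ≥0∞} (hp : 0 < p) (hr : 0 < r) (hC : C ≠ ∞)
    (h : ∀ᵐ x ∂μ, S x ≤ C * G x ^ (p / r)) :
    eLpNorm' S r μ ≤ C * eLpNorm' G p μ ^ (p / r) := by
  have rpow_le : ∀ᵐ x ∂μ, S x ^ r ≤ C ^ r * G x ^ p := by
    filter_upwards [h] with x hx
    refine (ENNReal.rpow_le_rpow hx hr.le).trans_eq ?_
    rw [ENNReal.mul_rpow_of_nonneg _ _ hr.le, ← ENNReal.rpow_mul, div_mul_cancel₀ _ hr.ne']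
  have lintegral_le : ∫⁻ x, S x ^ r ∂μ ≤ C ^ r * eLpNorm' G p μ ^ p :=
    calc ∫⁻ x, S x ^ r ∂μ ≤ ∫⁻ x, C ^ r * G x ^ p ∂μ := lintegral_mono_ae rpow_le
      _ = C ^ r * ∫⁻ x, ‖G x‖ₑ ^ p ∂μ :=
        lintegral_const_mul' _ _ (ENNReal.rpow_ne_top_of_nonneg hr.le hC)
      _ = C ^ r * eLpNorm' G p μ ^ p := by rw [lintegral_rpow_enorm_eq_rpow_eLpNorm' hp]
  rw [eLpNorm'_eq_lintegral_enorm, one_div, ENNReal.rpow_inv_le_iff hr,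
    ENNReal.mul_rpow_of_nonneg _ _ hr.le, ← ENNReal.rpow_mul, div_mul_cancel₀ _ hr.ne']
  exact lintegral_le

theorem two_rpow_mul_eLpNorm'_le (s : ℝ) (hp : 0 < p) (f : ℕ → X → E) (j : ℕ) :
    2 ^ (s * j) * eLpNorm' (f j) p μ ≤
      eLpNorm' (fun x => dyadicSupNorm s fun i => ‖f i x‖ₑ) p μ := by
  rw [eLpNorm'_eq_lintegral_enorm, eLpNorm'_eq_lintegral_enorm, one_div,
    ENNReal.le_rpow_inv_iff hp, ENNReal.mul_rpow_of_nonneg _ _ hp.le, ENNReal.rpow_inv_rpow hp.ne',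
    ← lintegral_const_mul' _ _ (by simp)]
  refine lintegral_mono fun x => ?_
  rw [← ENNReal.mul_rpow_of_nonneg _ _ hp.le, enorm_eq_self]
  gcongr
  exact two_rpow_mul_le_dyadicSupNorm s (fun i => ‖f i x‖ₑ) j

theorem dyadicSupNorm_le_mul_eLpNorm' (s : ℝ) (hp : 0 < p) {f : ℕ → X → E} {x : X}
    (hf : ∀ j : ℕ, ‖f j x‖ₑ ≤ C * 2 ^ (D / p * j) * eLpNorm' (f j) p μ) :
    dyadicSupNorm (s - D / p) (fun j => ‖f j x‖ₑ) ≤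
      C * eLpNorm' (fun y => dyadicSupNorm s fun j => ‖f j y‖ₑ) p μ := by
  refine iSup_le fun j => ?_
  calc 2 ^ ((s - D / p) * j) * ‖f j x‖ₑ
      ≤ 2 ^ ((s - D / p) * j) * (C * 2 ^ (D / p * j) * eLpNorm' (f j) p μ) := by
        gcongr
        exact hf j
    _ = C * (2 ^ ((s - D / p) * j + D / p * j) * eLpNorm' (f j) p μ) := by
        rw [two_rpow_add]
        ring
    _ = C * (2 ^ (s * j) * eLpNorm' (f j) p μ) := by ring_nf
    _ ≤ _ := by
        gcongr
        exact two_rpow_mul_eLpNorm'_le s hp f j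

theorem eLpNorm'_dyadicLqNorm_le_of_ae_dyadicSupNorm_le (hp : 0 < p) (hpr : p < r) (hσs : σ < s)
    (hq : 0 < q) {v : X → ℕ → ℝ≥0∞} (hC : C ≠ ∞) (hv : ∀ᵐ x ∂μ, dyadicSupNorm σ (v x) ≤ C) :
    eLpNorm' (fun x => dyadicLqNorm (p / r * s + (1 - p / r) * σ) q (v x)) r μ ≤
      twoSidedGeometricSum ((1 - p / r) * (s - σ) * q) (p / r * (s - σ) * q) ^ (1 / q) *
        C ^ (1 - p / r) * eLpNorm' (fun x => dyadicSupNorm s (v x)) p μ ^ (p / r) := by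
  have hr : 0 < r := hp.trans hpr
  have hθ : 0 < p / r := div_pos hp hr
  have hθ' : p / r < 1 := (div_lt_one hr).2 hpr
  have one_sub_pos : 0 < 1 - p / r := sub_pos.2 hθ'
  have gap_pos : 0 < s - σ := sub_pos.2 hσs
  have K_ne_top := twoSidedGeometricSum_ne_top
    (mul_pos (mul_pos one_sub_pos gap_pos) hq) (mul_pos (mul_pos hθ gap_pos) hq)
  refine eLpNorm'_le_of_ae_le_mul_rpow hp hr (ENNReal.mul_ne_top
    (ENNReal.rpow_ne_top_of_nonneg (by positivity) K_ne_top)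
    (ENNReal.rpow_ne_top_of_nonneg one_sub_pos.le hC)) ?_
  filter_upwards [hv] with x hx
  refine (dyadicLqNorm_le_interpolate hq hθ hθ' hσs (v x)).trans ?_
  rw [mul_comm (dyadicSupNorm s (v x) ^ _), ← mul_assoc (_ ^ (1 / q))]
  gcongr

theorem eq_interpolation_of_sub_div_eq (hp : 0 < p) (hr : 0 < r)
    (hsob : s - D / p = t - D / r) : t = p / r * s + (1 - p / r) * (s - D / p) := by
  rw [eq_add_of_sub_eq hsob]
  field_simp
  ring

theorem exists_eLpNorm'_dyadicLqNorm_le (hst : t < s) (hp : 0 < p) (hpr : p < r)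
    (hsob : s - D / p = t - D / r) (hq : 0 < q) (hC : 0 < C) (hC' : C ≠ ∞) :
    ∃ c : ℝ≥0∞, 0 < c ∧ c ≠ ∞ ∧ ∀ f : ℕ → X → E,
      (∀ j : ℕ, ∀ᵐ x ∂μ, ‖f j x‖ₑ ≤ C * 2 ^ (D / p * j) * eLpNorm' (f j) p μ) →
      eLpNorm' (fun x => dyadicLqNorm t q fun j => ‖f j x‖ₑ) r μ ≤
        c * eLpNorm' (fun x => dyadicSupNorm s fun j => ‖f j x‖ₑ) p μ := by
  have hr : 0 < r := hp.trans hpr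
  have hθ : 0 < p / r := div_pos hp hr
  have one_sub_pos : 0 < 1 - p / r := sub_pos.2 ((div_lt_one hr).2 hpr)
  have t_eq := eq_interpolation_of_sub_div_eq hp hr hsob
  have hσs : s - D / p < s := by nlinarith
  have gap_pos : 0 < s - (s - D / p) := sub_pos.2 hσs
  set K := twoSidedGeometricSum ((1 - p / r) * (s - (s - D / p)) * q)
    (p / r * (s - (s - D / p)) * q)
  have K_ne_top : K ≠ ∞ := twoSidedGeometricSum_ne_top
    (mul_pos (mul_pos one_sub_pos gap_pos) hq) (mul_pos (mul_pos hθ gap_pos) hq)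
  have c_pos : 0 < K ^ (1 / q) * C ^ (1 - p / r) := ENNReal.mul_pos
    (ENNReal.rpow_pos (twoSidedGeometricSum_pos _ _) K_ne_top).ne' (ENNReal.rpow_pos hC hC').ne'
  refine ⟨K ^ (1 / q) * C ^ (1 - p / r), c_pos, ENNReal.mul_ne_top
    (ENNReal.rpow_ne_top_of_nonneg (by positivity) K_ne_top)
    (ENNReal.rpow_ne_top_of_nonneg one_sub_pos.le hC'), fun f hf => ?_⟩
  set M := eLpNorm' (fun x => dyadicSupNorm s fun j => ‖f j x‖ₑ) p μ
  rcases eq_or_ne M ∞ with hM | hM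
  · rw [hM, ENNReal.mul_top c_pos.ne']
    exact le_top
  have ae_sup_le : ∀ᵐ x ∂μ, dyadicSupNorm (s - D / p) (fun j => ‖f j x‖ₑ) ≤ C * M := by
    filter_upwards [ae_all_iff.2 hf] with x hx
    exact dyadicSupNorm_le_mul_eLpNorm' s hp hx
  calc eLpNorm' (fun x => dyadicLqNorm t q fun j => ‖f j x‖ₑ) r μ
      ≤ K ^ (1 / q) * (C * M) ^ (1 - p / r) * M ^ (p / r) := by
        rw [t_eq]
        exact eLpNorm'_dyadicLqNorm_le_of_ae_dyadicSupNorm_le hp hpr hσs hq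
          (ENNReal.mul_ne_top hC' hM) ae_sup_le
    _ = K ^ (1 / q) * C ^ (1 - p / r) * M := by
        rw [ENNReal.mul_rpow_of_nonneg _ _ one_sub_pos.le, ← mul_assoc, mul_assoc _ (M ^ _),
          ← ENNReal.rpow_add_of_nonneg _ _ one_sub_pos.le hθ.le, sub_add_cancel, ENNReal.rpow_one]

end Embedding

section Kernel

theorem le_iSup_rpow_mul_rpow {Y : Type*} {p : ℝ} (hp : 0 ≤ p) (hp' : p ≤ 1) (g : Y → ℝ≥0∞)
    (y : Y) :
    g y ≤ (⨆ z, g z) ^ (1 - p) * g y ^ p :=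
  calc g y = g y ^ (1 - p) * g y ^ p := by
        rw [← ENNReal.rpow_add_of_nonneg _ _ (sub_nonneg.2 hp') hp, sub_add_cancel,
          ENNReal.rpow_one]
    _ ≤ _ := by
        gcongr
        exact le_iSup g y

variable {X : Type*} [MeasurableSpace X] {μ : Measure X} {g : X → ℝ≥0∞} {k : X → X → ℝ≥0∞}
  {p : ℝ} {B : ℝ≥0∞}

theorem iSup_le_of_le_lintegral_mul_of_le_one (hp : 0 < p) (hp' : p ≤ 1)
    (hg : ⨆ x, g x ≠ ∞) (hB : B ≠ ∞) (hk : ∀ x y, k x y ≤ B)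
    (hrepr : ∀ x, g x ≤ ∫⁻ y, k x y * g y ∂μ) :
    ⨆ x, g x ≤ B ^ (1 / p) * eLpNorm' g p μ := by
  set S := ⨆ x, g x
  have S_rpow_ne_top : S ^ (1 - p) ≠ ∞ := ENNReal.rpow_ne_top_of_nonneg (sub_nonneg.2 hp') hg
  rcases eq_or_ne S 0 with hS | hS
  · simp [hS]
  have S_le : S ≤ S ^ (1 - p) * (B * ∫⁻ y, g y ^ p ∂μ) := by
    refine iSup_le fun x => (hrepr x).trans ?_
    rw [← mul_assoc, ← lintegral_const_mul' _ _ (ENNReal.mul_ne_top S_rpow_ne_top hB)]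
    refine lintegral_mono fun y => ?_
    calc k x y * g y ≤ B * (S ^ (1 - p) * g y ^ p) := by
          gcongr
          · exact hk x y
          · exact le_iSup_rpow_mul_rpow hp.le hp' g y
      _ = S ^ (1 - p) * B * g y ^ p := by ring
  -- As `S` is finite, its power `S ^ (1 - p)` can be cancelled.
  have S_rpow_le : S ^ p ≤ B * ∫⁻ y, g y ^ p ∂μ := by
    refine (ENNReal.mul_le_mul_iff_right (ENNReal.rpow_pos hS.bot_lt hg).ne' S_rpow_ne_top).1 ?_
    rwa [← ENNReal.rpow_add _ _ hS hg, sub_add_cancel, ENNReal.rpow_one]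
  rw [eLpNorm'_eq_lintegral_enorm, ← ENNReal.mul_rpow_of_nonneg _ _ (by positivity), one_div,
    ENNReal.le_rpow_inv_iff hp]
  exact S_rpow_le

theorem lintegral_sub_left_mul_le_eLpNorm'_mul_eLpNorm' {G : Type*} [AddGroup G]
    [MeasurableSpace G] [MeasurableAdd G] [MeasurableNeg G] {ν : Measure G}
    [ν.IsAddLeftInvariant] [ν.IsNegInvariant] {q : ℝ} (hpq : p.HolderConjugate q)
    {φ h : G → ℝ≥0∞} (hφ : Measurable φ) (hh : AEMeasurable h ν) (x : G) :
    ∫⁻ y, φ (x - y) * h y ∂ν ≤ eLpNorm' φ p ν * eLpNorm' h q ν := by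
  refine (ENNReal.lintegral_mul_le_Lp_mul_Lq ν hpq ?_ hh).trans_eq ?_
  · simp_rw [sub_eq_add_neg]
    exact (hφ.comp (measurable_neg.const_add x)).aemeasurable
  · rw [lintegral_sub_left_eq_self (fun y => φ y ^ p) x]
    rfl

end Kernel

section Nikolskii

theorem exists_schwartzMap_eq_one_on {V : Type*} [NormedAddCommGroup V]
    [InnerProductSpace ℝ V] [FiniteDimensional ℝ V] {K : Set V} (hK : Bornology.IsBounded K) :
    ∃ φ : 𝓢(V, ℂ), ∀ ξ ∈ K, φ ξ = 1 := by
  obtain ⟨R, hR, K_subset⟩ := hK.subset_closedBall_lt 0 0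
  let β : ContDiffBump (0 : V) := ⟨R, R + 1, hR, lt_add_one R⟩
  have compactSupport : HasCompactSupport fun ξ => (β ξ : ℂ) :=
    β.hasCompactSupport.comp_left Complex.ofReal_zero
  refine ⟨compactSupport.toSchwartzMap (Complex.ofRealCLM.contDiff.comp β.contDiff),
    fun ξ hξ => ?_⟩
  change (β ξ : ℂ) = 1
  rw [β.one_of_mem_closedBall (K_subset hξ), Complex.ofReal_one]

theorem schwartzMap_enorm_le_seminorm {V F : Type*} [NormedAddCommGroup V] [NormedSpace ℝ V]
    [NormedAddCommGroup F] [NormedSpace ℝ F] (ψ : 𝓢(V, F)) (x : V) :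
    ‖ψ x‖ₑ ≤ ENNReal.ofReal (SchwartzMap.seminorm ℝ 0 0 ψ) := by
  rw [← ofReal_norm]
  exact ENNReal.ofReal_le_ofReal (SchwartzMap.norm_le_seminorm ℝ ψ x)

theorem schwartzMap_eLpNorm'_ne_top {V F : Type*} [NormedAddCommGroup V] [NormedSpace ℝ V]
    [MeasurableSpace V] [OpensMeasurableSpace V] [NormedAddCommGroup F] [NormedSpace ℝ F]
    [SecondCountableTopologyEither V F] {μ : Measure V} [μ.HasTemperateGrowth] (ψ : 𝓢(V, F))
    {p : ℝ} (hp : 0 < p) : eLpNorm' ψ p μ ≠ ∞ := by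
  have memLp := (ψ.memLp (ENNReal.ofReal p) μ).eLpNorm_ne_top
  rwa [eLpNorm_eq_eLpNorm' (by simpa using hp) ENNReal.ofReal_ne_top,
    ENNReal.toReal_ofReal hp.le] at memLp

variable {V F : Type*} [NormedAddCommGroup V] [InnerProductSpace ℝ V] [FiniteDimensional ℝ V]
  [MeasurableSpace V] [BorelSpace V] [NormedAddCommGroup F] [NormedSpace ℂ F]
  {K : Set V} {p : ℝ}

theorem exists_reproducing_kernel [CompleteSpace F] (hK : Bornology.IsBounded K) :
    ∃ ψ : 𝓢(V, ℂ), ∀ f : 𝓢(V, F), Function.support (𝓕 (f : V → F)) ⊆ K →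
      ∀ x, f x = ∫ y, ψ (x - y) • f y := by
  obtain ⟨φ, φ_eq_one⟩ := exists_schwartzMap_eq_one_on hK
  refine ⟨𝓕⁻ φ, fun f hf x => ?_⟩
  let B : F →L[ℂ] ℂ →L[ℂ] F := (ContinuousLinearMap.lsmul ℂ ℂ).flip
  have fourier_eq : 𝓕 (SchwartzMap.convolution B f (𝓕⁻ φ)) = 𝓕 f := by
    rw [SchwartzMap.fourier_convolution, FourierTransform.fourier_fourierInv_eq]
    ext ξ
    rw [SchwartzMap.pairing_apply_apply]
    by_cases hξ : 𝓕 f ξ = 0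
    · simp [hξ]
    · simp [B, φ_eq_one ξ (hf hξ)]
  have convolution_eq : SchwartzMap.convolution B f (𝓕⁻ φ) = f := by
    simpa only [FourierTransform.fourierInv_fourier_eq] using
      congrArg (𝓕⁻ · : 𝓢(V, F) → 𝓢(V, F)) fourier_eq
  conv_lhs => rw [← convolution_eq, SchwartzMap.convolution_apply]
  rfl

theorem exists_enorm_le_mul_eLpNorm' [CompleteSpace F] (hK : Bornology.IsBounded K) (hp : 0 < p) :
    ∃ C : ℝ≥0∞, C ≠ ∞ ∧ ∀ f : 𝓢(V, F), Function.support (𝓕 (f : V → F)) ⊆ K →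
      ∀ x, ‖f x‖ₑ ≤ C * eLpNorm' f p volume := by
  obtain ⟨ψ, reproducing⟩ := exists_reproducing_kernel (F := F) hK
  have enorm_le_lintegral (f : 𝓢(V, F)) (hf : Function.support (𝓕 (f : V → F)) ⊆ K) (x : V) :
      ‖f x‖ₑ ≤ ∫⁻ y, ‖ψ (x - y)‖ₑ * ‖f y‖ₑ := by
    conv_lhs => rw [reproducing f hf x]
    simpa only [enorm_smul] using enorm_integral_le_lintegral_enorm fun y => ψ (x - y) • f y
  rcases le_or_gt p 1 with hp' | hp'
  · have iSup_ne_top (f : 𝓢(V, F)) : ⨆ x, ‖f x‖ₑ ≠ ∞ :=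
      ne_top_of_le_ne_top ENNReal.ofReal_ne_top (iSup_le (schwartzMap_enorm_le_seminorm f))
    refine ⟨ENNReal.ofReal (SchwartzMap.seminorm ℝ 0 0 ψ) ^ (1 / p),
      ENNReal.rpow_ne_top_of_nonneg (by positivity) ENNReal.ofReal_ne_top, fun f hf x =>
        (le_iSup (fun x => ‖f x‖ₑ) x).trans ?_⟩
    exact iSup_le_of_le_lintegral_mul_of_le_one hp hp' (iSup_ne_top f) ENNReal.ofReal_ne_top
      (fun x y => schwartzMap_enorm_le_seminorm ψ (x - y)) (enorm_le_lintegral f hf)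
  · have hconj := (Real.HolderConjugate.conjExponent hp').symm
    refine ⟨eLpNorm' ψ p.conjExponent volume, schwartzMap_eLpNorm'_ne_top ψ hconj.pos,
      fun f hf x => (enorm_le_lintegral f hf x).trans ?_⟩
    exact lintegral_sub_left_mul_le_eLpNorm'_mul_eLpNorm' hconj ψ.continuous.enorm.measurable
      f.continuous.enorm.aemeasurable x

end Nikolskii

section Dilation

section AddHaar

variable {V F : Type*} [NormedAddCommGroup V] [NormedSpace ℝ V] [FiniteDimensional ℝ V]
  [MeasurableSpace V] [BorelSpace V] (μ : Measure V) [μ.IsAddHaarMeasure] (L : V ≃L[ℝ] V)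

theorem map_continuousLinearEquiv_addHaar :
    Measure.map L μ = ENNReal.ofReal |LinearMap.det (L : V →ₗ[ℝ] V)|⁻¹ • μ := by
  rw [← abs_inv]
  exact Measure.map_linearMap_addHaar_eq_smul_addHaar μ L.toLinearEquiv.isUnit_det'.ne_zero

theorem eLpNorm'_comp_continuousLinearEquiv [ENorm F] {p : ℝ} (hp : 0 ≤ p) (f : V → F) :
    eLpNorm' (f ∘ L) p μ =
      ENNReal.ofReal |LinearMap.det (L : V →ₗ[ℝ] V)|⁻¹ ^ (1 / p) * eLpNorm' f p μ := by
  have change_of_variables :=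
    L.toHomeomorph.measurableEmbedding.lintegral_map (μ := μ) fun y => ‖f y‖ₑ ^ p
  simp only [ContinuousLinearEquiv.coe_toHomeomorph, map_continuousLinearEquiv_addHaar,
    lintegral_smul_measure, smul_eq_mul] at change_of_variables
  rw [eLpNorm'_eq_lintegral_enorm, eLpNorm'_eq_lintegral_enorm,
    ← ENNReal.mul_rpow_of_nonneg _ _ (by positivity), change_of_variables]
  rfl

end AddHaar

variable {V F : Type*} [NormedAddCommGroup V] [InnerProductSpace ℝ V] [FiniteDimensional ℝ V]
  [MeasurableSpace V] [BorelSpace V] [NormedAddCommGroup F] [NormedSpace ℂ F]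
  {K : Set V} {p : ℝ} (L : V ≃L[ℝ] V)

theorem fourier_comp_continuousLinearEquiv (f : V → F) (ξ : V) :
    𝓕 (f ∘ L) (LinearMap.adjoint (L : V →ₗ[ℝ] V) ξ) =
      |LinearMap.det (L : V →ₗ[ℝ] V)|⁻¹ • 𝓕 f ξ := by
  have change_of_variables := L.toHomeomorph.measurableEmbedding.integral_map (μ := volume)
    fun y => Real.fourierChar (-inner ℝ y ξ) • f y
  simp only [ContinuousLinearEquiv.coe_toHomeomorph, map_continuousLinearEquiv_addHaar,
    integral_smul_measure, ENNReal.toReal_ofReal (inv_nonneg.2 (abs_nonneg _))]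
    at change_of_variables
  simp only [Real.fourier_eq, LinearMap.adjoint_inner_right, change_of_variables]
  rfl

theorem support_fourier_comp_subset {f : V → F}
    (hf : Function.support (𝓕 f) ⊆ LinearMap.adjoint (L : V →ₗ[ℝ] V) ⁻¹' K) :
    Function.support (𝓕 (f ∘ L)) ⊆ K := by
  intro η hη
  obtain ⟨ξ, rfl⟩ : ∃ ξ, LinearMap.adjoint (L : V →ₗ[ℝ] V) ξ = η := by
    refine ⟨LinearMap.adjoint (L.symm : V →ₗ[ℝ] V) η, ?_⟩
    rw [← LinearMap.comp_apply, ← LinearMap.adjoint_comp]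
    simp
  rw [Function.mem_support, fourier_comp_continuousLinearEquiv] at hη
  exact hf (right_ne_zero_of_smul hη)

theorem exists_enorm_le_mul_eLpNorm'_of_dilated_support [CompleteSpace F]
    (hK : Bornology.IsBounded K) (hp : 0 < p) :
    ∃ C : ℝ≥0∞, 0 < C ∧ C ≠ ∞ ∧ ∀ (L : V →ₗ[ℝ] V), LinearMap.det L ≠ 0 → ∀ f : 𝓢(V, F),
      Function.support (𝓕 (f : V → F)) ⊆ LinearMap.adjoint L ⁻¹' K →
      ∀ x, ‖f x‖ₑ ≤ C * ENNReal.ofReal |LinearMap.det L|⁻¹ ^ (1 / p) * eLpNorm' f p volume := by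
  obtain ⟨C, hC, nikolskii⟩ := exists_enorm_le_mul_eLpNorm' (F := F) hK hp
  refine ⟨C + 1, by positivity, by simpa using hC, fun L hL f hf x => ?_⟩
  let e : V ≃L[ℝ] V := (L.equivOfDetNeZero hL).toContinuousLinearEquiv
  let g : 𝓢(V, F) := SchwartzMap.compCLMOfContinuousLinearEquiv ℝ e f
  have bound : ‖g (e.symm x)‖ₑ ≤ C * eLpNorm' (f ∘ e) p volume :=
    nikolskii g (support_fourier_comp_subset e hf) (e.symm x)
  calc ‖f x‖ₑ = ‖g (e.symm x)‖ₑ := by simp [g]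
    _ ≤ C * (ENNReal.ofReal |LinearMap.det L|⁻¹ ^ (1 / p) * eLpNorm' f p volume) :=
      bound.trans_eq (congrArg (C * ·) (eLpNorm'_comp_continuousLinearEquiv volume e hp.le f))
    _ ≤ (C + 1) * ENNReal.ofReal |LinearMap.det L|⁻¹ ^ (1 / p) * eLpNorm' f p volume := by
      rw [mul_assoc]
      gcongr
      exact le_self_add

end Dilation

theorem isBounded_setOf_abs_le {ι : Type*} [Finite ι] (A : ℝ) :
    Bornology.IsBounded {ξ : EuclideanSpace ℝ ι | ∀ k, |ξ k| ≤ A} := by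
  have := Fintype.ofFinite ι
  refine ((PiLp.antilipschitzWith_ofLp 2 fun _ : ι => ℝ).isBounded_preimage
    (Bornology.IsBounded.pi fun _ => Metric.isBounded_Icc (-A) A)).subset fun ξ hξ => ?_
  exact fun k _ => abs_le.1 (hξ k)

theorem exists_enorm_le_mul_eLpNorm'_of_support_subset_box {ι F : Type*} [Fintype ι]
    [NormedAddCommGroup F] [NormedSpace ℂ F] [CompleteSpace F] (A : ℝ) {p : ℝ} (hp : 0 < p) :
    ∃ C : ℝ≥0∞, 0 < C ∧ C ≠ ∞ ∧ ∀ R : ι → ℝ, (∀ k, 0 < R k) →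
      ∀ f : 𝓢(EuclideanSpace ℝ ι, F),
      Function.support (𝓕 (f : EuclideanSpace ℝ ι → F)) ⊆ {ξ | ∀ k, |ξ k| ≤ A * R k} →
      ∀ x, ‖f x‖ₑ ≤ C * ENNReal.ofReal (∏ k, R k) ^ (1 / p) * eLpNorm' f p volume := by
  classical
  obtain ⟨C, hC, hC', nikolskii⟩ :=
    exists_enorm_le_mul_eLpNorm'_of_dilated_support (F := F) (isBounded_setOf_abs_le (ι := ι) A) hp
  refine ⟨C, hC, hC', fun R hR f hf x => ?_⟩
  let L := Matrix.toEuclideanLin (Matrix.diagonal fun k => (R k)⁻¹)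
  have prod_pos : 0 < ∏ k, R k := Finset.prod_pos fun k _ => hR k
  have det_L : LinearMap.det L = (∏ k, R k)⁻¹ := by
    rw [← Finset.prod_inv_distrib, ← Matrix.det_diagonal,
      ← LinearMap.det_toLin (PiLp.basisFun 2 ℝ ι)]
    rfl
  have adjoint_L (ξ : EuclideanSpace ℝ ι) (k : ι) : LinearMap.adjoint L ξ k = (R k)⁻¹ * ξ k := by
    rw [← Matrix.toEuclideanLin_conjTranspose_eq_adjoint]
    simp [Matrix.mulVec_diagonal]
  have support_subset : Function.support (𝓕 (f : EuclideanSpace ℝ ι → F)) ⊆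
      LinearMap.adjoint L ⁻¹' {ξ | ∀ k, |ξ k| ≤ A} := by
    intro ξ hξ k
    rw [adjoint_L, abs_mul, abs_inv, abs_of_pos (hR k), inv_mul_le_iff₀ (hR k), mul_comm]
    exact hf hξ k
  have bound := nikolskii L (by rw [det_L]; positivity) f support_subset x
  rwa [det_L, abs_of_pos (by positivity), inv_inv] at bound

theorem dyadicLqNorm_rpow (t q r : ℝ) (v : ℕ → ℝ≥0∞) :
    dyadicLqNorm t q v ^ r = (∑' j : ℕ, (2 ^ (t * j) * v j) ^ q) ^ (r / q) := by
  rw [dyadicLqNorm, ← ENNReal.rpow_mul, one_div_mul_eq_div]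

theorem ofReal_prod_two_rpow_rpow {ι : Type*} [Fintype ι] (a : ι → ℝ) (p x : ℝ) :
    ENNReal.ofReal (∏ k, 2 ^ (x * a k)) ^ (1 / p) = 2 ^ ((∑ k, a k) / p * x) := by
  rw [← Real.rpow_sum_of_pos two_pos, ← Finset.mul_sum, ← ENNReal.ofReal_rpow_of_pos two_pos,
    ENNReal.ofReal_ofNat, ← ENNReal.rpow_mul]
  ring_nf

theorem stmt17_general {ι F : Type*} [Fintype ι] [NormedAddCommGroup F] [NormedSpace ℂ F]
    [CompleteSpace F] (a : ι → ℝ) {s t p r q : ℝ} (hst : t < s) (hp : 0 < p) (hpr : p < r)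
    (hsob : s - (∑ k, a k) / p = t - (∑ k, a k) / r) (hq : 0 < q) (A : ℝ) :
    ∃ c : ℝ≥0∞, 0 < c ∧ c ≠ ∞ ∧ ∀ f : ℕ → 𝓢(EuclideanSpace ℝ ι, F),
      (∀ j : ℕ, Function.support (𝓕 (f j : EuclideanSpace ℝ ι → F)) ⊆
        {ξ | ∀ k, |ξ k| ≤ A * 2 ^ (j * a k)}) →
      (∫⁻ x, (∑' j : ℕ, (2 ^ (t * j) * ‖f j x‖ₑ) ^ q) ^ (r / q)) ^ (1 / r) ≤
        c * (∫⁻ x, (⨆ j : ℕ, 2 ^ (s * j) * ‖f j x‖ₑ) ^ p) ^ (1 / p) := by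
  obtain ⟨C, hC, hC', nikolskii⟩ :=
    exists_enorm_le_mul_eLpNorm'_of_support_subset_box (ι := ι) (F := F) A hp
  obtain ⟨c, hc, hc', embedding⟩ := exists_eLpNorm'_dyadicLqNorm_le
    (E := F) (μ := (volume : Measure (EuclideanSpace ℝ ι))) hst hp hpr hsob hq hC hC'
  refine ⟨c, hc, hc', fun f hf => ?_⟩
  have pointwise_bound (j : ℕ) (x : EuclideanSpace ℝ ι) :
      ‖f j x‖ₑ ≤ C * 2 ^ ((∑ k, a k) / p * j) * eLpNorm' (f j) p volume := by
    rw [← ofReal_prod_two_rpow_rpow]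
    exact nikolskii (fun k => 2 ^ (j * a k)) (fun k => by positivity) (f j) (hf j) x
  simp_rw [← dyadicLqNorm_rpow]
  exact embedding (fun j => f j) fun j => .of_forall (pointwise_bound j)

/-- Anisotropic Sobolev embedding inequality for Lizorkin–Triebel quasi-norms of band-limited
sequences (unmixed integrability): if `s - (a₁+⋯+aₙ)/p = t - (a₁+⋯+aₙ)/r` with `s > t` and
`0 < p < r < ∞`, and `supp 𝓕f_j` is contained in the anisotropic rectangle
`∏_k [-A·2^{j a_k}, A·2^{j a_k}]`, then
`‖(∑_j 2^{tjq}|f_j|^q)^{1/q}‖_r ≤ c ‖sup_j 2^{sj}|f_j|‖_p`. -/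
theorem stmt17 (n : ℕ) (hn : 1 ≤ n) (a : Fin n → ℝ) (ha : ∀ k, 1 ≤ a k)
    (s t : ℝ) (hst : t < s) (p r : ℝ) (hp : 0 < p) (hpr : p < r)
    (hsob : s - (∑ k : Fin n, a k) / p = t - (∑ k : Fin n, a k) / r)
    (q : ℝ) (hq : 0 < q) (A : ℝ) (hA : 0 < A) :
    ∃ c : ℝ≥0∞, 0 < c ∧ c ≠ ∞ ∧
      ∀ f : ℕ → 𝓢(EuclideanSpace ℝ (Fin n), ℂ),
        (∀ j : ℕ, Function.support (𝓕 (f j : EuclideanSpace ℝ (Fin n) → ℂ))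
          ⊆ {ξ : EuclideanSpace ℝ (Fin n) | ∀ k : Fin n, |ξ k| ≤ A * 2 ^ ((j:ℝ) * a k)}) →
        (∫⁻ x : EuclideanSpace ℝ (Fin n),
            (∑' j : ℕ, ((2:ℝ≥0∞) ^ (t * (j:ℝ)) * ‖f j x‖₊) ^ q) ^ (r / q)) ^ (1 / r)
          ≤ c * (∫⁻ x : EuclideanSpace ℝ (Fin n),
              (⨆ j : ℕ, (2:ℝ≥0∞) ^ (s * (j:ℝ)) * ‖f j x‖₊) ^ p) ^ (1 / p) :=
  stmt17_general a hst hp hpr hsob hq A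
end
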